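/- arXiv:2501.11215 — 3 statements merged into one kernel-verified Lean document; each statement's English description precedes it below -/
import Mathlib

section
/- Let H₁ and H₂ be connected combinatorial hypermaps on disjoint flag sets, and let H₁ ∨ H₂ be their join at any chosen corners. Then the partial-dual Euler-genus polynomial is multiplicative: ∂ε_{H₁ ∨ H₂}(z) = ∂ε_{H₁}(z) · ∂ε_{H₂}(z). -/
open Classical

/-- A pre-hypermap on a set of flags `F`: three structure maps `θ₀, θ₁, θ₂`.
It is a genuine combinatorial hypermap when the three maps are
fixed-point-free involutions (see `PreHypermap.IsHypermap`). -/
structure PreHypermap (F : Type*) where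
  theta : Fin 3 → F → F

namespace PreHypermap

variable {F : Type*}

/-- `H` is a combinatorial hypermap: `θ₀, θ₁, θ₂` are fixed-point-free involutions. -/
def IsHypermap (H : PreHypermap F) : Prop :=
  ∀ i : Fin 3, Function.Involutive (H.theta i) ∧ ∀ x : F, H.theta i x ≠ x

/-- The equivalence relation on `F` generated by a set of functions `F → F`;
for a set of involutions, two flags are related iff they are in the same orbit
of the subgroup generated by those involutions. -/
def orbitRel (fs : Set (F → F)) : F → F → Prop :=
  Relation.EqvGen (fun x y => ∃ f ∈ fs, f x = y)

/-- The setoid of orbits of the subgroup generated by a set of involutions. -/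
def orbitSetoid (fs : Set (F → F)) : Setoid F :=
  Relation.EqvGen.setoid (fun x y => ∃ f ∈ fs, f x = y)

/-- The number of orbits on `F` of the subgroup generated by a set of involutions. -/
noncomputable def orbitCount (fs : Set (F → F)) : ℕ :=
  Nat.card (Quotient (orbitSetoid fs))

/-- `v H`: the number of vertices, i.e. orbits of `⟨θ₁, θ₂⟩`. -/
noncomputable def v (H : PreHypermap F) : ℕ := orbitCount {H.theta 1, H.theta 2}

/-- `e H`: the number of hyperedges, i.e. orbits of `⟨θ₀, θ₂⟩`. -/
noncomputable def e (H : PreHypermap F) : ℕ := orbitCount {H.theta 0, H.theta 2}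

/-- `f H`: the number of faces, i.e. orbits of `⟨θ₀, θ₁⟩`. -/
noncomputable def f (H : PreHypermap F) : ℕ := orbitCount {H.theta 0, H.theta 1}

/-- `c H`: the number of components, i.e. orbits of `⟨θ₀, θ₁, θ₂⟩`. -/
noncomputable def c (H : PreHypermap F) : ℕ :=
  orbitCount {H.theta 0, H.theta 1, H.theta 2}

/-- `H` is connected if it has exactly one component. -/
def Connected (H : PreHypermap F) : Prop := H.c = 1

/-- The Euler characteristic `χ(H) = v + e + f - |F|/2`. -/
noncomputable def chi (H : PreHypermap F) : ℤ :=
  (H.v : ℤ) + (H.e : ℤ) + (H.f : ℤ) - (Nat.card F : ℤ) / 2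

/-- The Euler genus `ε(H) = 2 c(H) - χ(H)`. -/
noncomputable def eulerGenus (H : PreHypermap F) : ℤ := 2 * (H.c : ℤ) - H.chi

/-- `H` is orientable: there is `o : F → {+1, -1}` with `o (θᵢ x) = - o x` for all `i, x`. -/
def Orientable (H : PreHypermap F) : Prop :=
  ∃ o : F → ℤ, (∀ x : F, o x = 1 ∨ o x = -1) ∧
    ∀ (i : Fin 3) (x : F), o (H.theta i x) = - o x

/-- The set `E(H)` of hyperedges of `H`, each hyperedge being its set of flags
(an orbit of `⟨θ₀, θ₂⟩`). -/
def edges (H : PreHypermap F) : Set (Set F) :=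
  {s : Set F | ∃ x : F, s = {y : F | orbitRel {H.theta 0, H.theta 2} x y}}

/-- The geometric dual `H* = (F, θ₂, θ₁, θ₀)`. -/
def dual (H : PreHypermap F) : PreHypermap F where
  theta := fun i => H.theta (2 - i)

/-- The partial dual of `H` with respect to a set `S` of flags (interchange `θ₀` and
`θ₂` on `S`); for `A ⊆ E(H)` the partial dual `H^A` is `H.pdual (⋃₀ A)`. -/
noncomputable def pdual (H : PreHypermap F) (S : Set F) : PreHypermap F where
  theta := fun i x =>
    if i = 1 then H.theta 1 x
    else if x ∈ S then H.theta (2 - i) x else H.theta i x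

/-- `f(A)` for `A ⊆ E(H)`: the number of orbits of `⟨θ₁, θ₂^A⟩` (which equals `v(H^A)`). -/
noncomputable def subf (H : PreHypermap F) (A : Set (Set F)) : ℕ :=
  (H.pdual (⋃₀ A)).v

/-- `c(A)` for `A ⊆ E(H)`: the number of orbits of the subgroup generated by `θ₁`, `θ₂`
and the permutation equal to `θ₀` on `S(A)` and the identity elsewhere. -/
noncomputable def subc (H : PreHypermap F) (A : Set (Set F)) : ℕ :=
  orbitCount {H.theta 1, H.theta 2, fun x => if x ∈ ⋃₀ A then H.theta 0 x else x}

/-- `χ(A) = v(A) + e(A) + f(A) - |S(A)|/2` for `A ⊆ E(H)`, where `v(A) = v(H)`,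
`e(A) = |A|`, `f(A) = v(H^A)` and `S(A) = ⋃₀ A`. -/
noncomputable def subchi (H : PreHypermap F) (A : Set (Set F)) : ℤ :=
  (H.v : ℤ) + (A.ncard : ℤ) + (H.subf A : ℤ) - ((⋃₀ A).ncard : ℤ) / 2

/-- `ε(A) = 2 c(A) - χ(A)` for `A ⊆ E(H)`. -/
noncomputable def subeps (H : PreHypermap F) (A : Set (Set F)) : ℤ :=
  2 * (H.subc A : ℤ) - H.subchi A

/-- The hyperedge set of `H` as a finset. -/
noncomputable def edgeFinset (H : PreHypermap F) [Fintype F] : Finset (Set F) :=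
  (Set.toFinite H.edges).toFinset

/-- The partial-dual Euler-genus polynomial `∂ε_H(z) = Σ_{A ⊆ E(H)} z^(ε(H^A))`. -/
noncomputable def pdPoly (H : PreHypermap F) [Fintype F] : Polynomial ℕ :=
  ∑ A ∈ H.edgeFinset.powerset,
    Polynomial.X ^ ((H.pdual (⋃₀ (A : Set (Set F)))).eulerGenus).toNat

/-- The partial-dual orientable-genus polynomial `∂Γ_H(z) = Σ_{A ⊆ E(H)} z^(ε(H^A)/2)`. -/
noncomputable def pdGammaPoly (H : PreHypermap F) [Fintype F] : Polynomial ℕ :=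
  ∑ A ∈ H.edgeFinset.powerset,
    Polynomial.X ^ (((H.pdual (⋃₀ (A : Set (Set F)))).eulerGenus) / 2).toNat

/-- The join `H₁ ∨ H₂` of two hypermaps on disjoint flag sets, joining the corner
`{x, θ₁ x}` of `H₁` to the corner `{y, θ₁′ y}` of `H₂`. -/
noncomputable def join {F₁ F₂ : Type*} (H₁ : PreHypermap F₁) (H₂ : PreHypermap F₂)
    (x : F₁) (y : F₂) : PreHypermap (F₁ ⊕ F₂) where
  theta := fun i z =>
    if i = 1 then
      if z = Sum.inl x then Sum.inr y
      else if z = Sum.inr y then Sum.inl x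
      else if z = Sum.inl (H₁.theta 1 x) then Sum.inr (H₂.theta 1 y)
      else if z = Sum.inr (H₂.theta 1 y) then Sum.inl (H₁.theta 1 x)
      else Sum.map (H₁.theta 1) (H₂.theta 1) z
    else Sum.map (H₁.theta i) (H₂.theta i) z

/-- The bar-amalgamation `H₁ ⊕ H₂` of two hypermaps on disjoint flag sets, with a new
connecting hyperedge `{p, q, p', q'} = Fin 4` meeting the corner `{x, θ₁ x}` of `H₁`
and the corner `{y, θ₁′ y}` of `H₂`. -/
noncomputable def bar {F₁ F₂ : Type*} (H₁ : PreHypermap F₁) (H₂ : PreHypermap F₂)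
    (x : F₁) (y : F₂) : PreHypermap ((F₁ ⊕ F₂) ⊕ Fin 4) where
  theta := fun i z =>
    if i = 0 then
      match z with
      | .inl (.inl a) => .inl (.inl (H₁.theta 0 a))
      | .inl (.inr b) => .inl (.inr (H₂.theta 0 b))
      | .inr k => .inr (Equiv.swap (0 : Fin 4) 2 (Equiv.swap (1 : Fin 4) 3 k))
    else if i = 2 then
      match z with
      | .inl (.inl a) => .inl (.inl (H₁.theta 2 a))
      | .inl (.inr b) => .inl (.inr (H₂.theta 2 b))
      | .inr k => .inr (Equiv.swap (0 : Fin 4) 1 (Equiv.swap (2 : Fin 4) 3 k))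
    else
      if z = .inl (.inl x) then .inr 0
      else if z = .inr 0 then .inl (.inl x)
      else if z = .inl (.inl (H₁.theta 1 x)) then .inr 1
      else if z = .inr 1 then .inl (.inl (H₁.theta 1 x))
      else if z = .inl (.inr y) then .inr 2
      else if z = .inr 2 then .inl (.inr y)
      else if z = .inl (.inr (H₂.theta 1 y)) then .inr 3
      else if z = .inr 3 then .inl (.inr (H₂.theta 1 y))
      else
        match z with
        | .inl (.inl a) => .inl (.inl (H₁.theta 1 a))
        | .inl (.inr b) => .inl (.inr (H₂.theta 1 b))
        | .inr k => .inr k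

end PreHypermap

namespace PreHypermap
variable {F : Type*}

def glue (S : Setoid F) (p q : F) : Setoid F where
  r a b := S a b ∨ (S a p ∧ S q b) ∨ (S a q ∧ S p b)
  iseqv := by
    refine ⟨fun a => Or.inl (S.refl a), ?_, ?_⟩
    · rintro a b (h | ⟨h, h'⟩ | ⟨h, h'⟩)
      · exact Or.inl (S.symm h)
      · exact Or.inr (Or.inr ⟨S.symm h', S.symm h⟩)
      · exact Or.inr (Or.inl ⟨S.symm h', S.symm h⟩)
    · have T := @S.trans
      have Y := @S.symm
      rintro a b c (h | ⟨h, h'⟩ | ⟨h, h'⟩) (k | ⟨k, k'⟩ | ⟨k, k'⟩)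
      · exact Or.inl (T h k)
      · exact Or.inr (Or.inl ⟨T h k, k'⟩)
      · exact Or.inr (Or.inr ⟨T h k, k'⟩)
      · exact Or.inr (Or.inl ⟨h, T h' k⟩)
      · exact Or.inr (Or.inl ⟨h, k'⟩)
      · exact Or.inl (T h k')
      · exact Or.inr (Or.inr ⟨h, T h' k⟩)
      · exact Or.inl (T h k')
      · exact Or.inr (Or.inr ⟨h, k'⟩)

lemma glue_def (S : Setoid F) (p q a b : F) :
    glue S p q a b ↔ (S a b ∨ (S a p ∧ S q b) ∨ (S a q ∧ S p b)) := Iff.rfl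

lemma le_glue (S : Setoid F) (p q : F) : S ≤ glue S p q := fun _ _ h => Or.inl h

lemma glue_rel (S : Setoid F) (p q : F) : glue S p q p q :=
  Or.inr (Or.inl ⟨S.refl p, S.refl q⟩)

lemma glue_le {S T : Setoid F} {p q : F} (h : S ≤ T) (hpq : T p q) : glue S p q ≤ T := by
  rintro a b (k | ⟨k, k'⟩ | ⟨k, k'⟩)
  · exact h k
  · exact T.trans (h k) (T.trans hpq (h k'))
  · exact T.trans (h k) (T.trans (T.symm hpq) (h k'))

lemma glue_eq {S : Setoid F} {p q : F} (h : S p q) : glue S p q = S :=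
  le_antisymm (glue_le le_rfl h) (le_glue S p q)

lemma card_glue [Finite F] {S : Setoid F} {p q : F} (h : ¬ S p q) :
    Nat.card (Quotient S) = Nat.card (Quotient (glue S p q)) + 1 := by
  rw [← Nat.card_congr (Equiv.optionSubtypeNe (Quotient.mk S q)), Finite.card_option]
  congr 1
  let m : Quotient S → Quotient (glue S p q) :=
    Quotient.map' id (fun a b hab => le_glue S p q hab)
  refine Nat.card_congr (Equiv.ofBijective (fun c => m c.1) ⟨?_, ?_⟩)
  · rintro ⟨a, ha⟩ ⟨b, hb⟩ hab
    induction a using Quotient.inductionOn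
    induction b using Quotient.inductionOn
    rename_i a b
    have hab' : glue S p q a b := Quotient.exact hab
    have ha' : ¬ S a q := fun k => ha (Quotient.sound k)
    have hb' : ¬ S b q := fun k => hb (Quotient.sound k)
    apply Subtype.ext
    apply Quotient.sound
    rcases hab' with k | ⟨k, k'⟩ | ⟨k, k'⟩
    · exact k
    · exact absurd (S.symm k') hb'
    · exact absurd k ha'
  · intro c
    induction c using Quotient.inductionOn
    rename_i a
    by_cases ha : S a q
    · refine ⟨⟨Quotient.mk S p, fun k => h (Quotient.exact k)⟩, ?_⟩
      apply Quotient.sound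
      exact (glue S p q).trans (glue_rel S p q) (le_glue S p q (S.symm ha))
    · exact ⟨⟨Quotient.mk S a, fun k => ha (Quotient.exact k)⟩, rfl⟩

lemma card_glue_le [Finite F] (S : Setoid F) (p q : F) :
    Nat.card (Quotient S) ≤ Nat.card (Quotient (glue S p q)) + 1 := by
  by_cases h : S p q
  · rw [glue_eq h]; omega
  · exact (card_glue h).le

lemma card_le_of_le [Finite F] {S T : Setoid F} (h : S ≤ T) :
    Nat.card (Quotient T) ≤ Nat.card (Quotient S) := by
  refine Nat.card_le_card_of_surjective (Quotient.map' id (fun a b hab => h hab)) ?_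
  intro c
  induction c using Quotient.inductionOn
  rename_i a
  exact ⟨Quotient.mk S a, rfl⟩

lemma orbit_gen {G : Set (F → F)} {g : F → F} (hg : g ∈ G) (a : F) :
    orbitSetoid G a (g a) := Relation.EqvGen.rel _ _ ⟨g, hg, rfl⟩

lemma orbit_le {G : Set (F → F)} {T : Setoid F} (h : ∀ g ∈ G, ∀ a, T a (g a)) :
    orbitSetoid G ≤ T := by
  intro a b hab
  have hab' : Relation.EqvGen (fun x y => ∃ f ∈ G, f x = y) a b := hab
  clear hab
  induction hab' with
  | rel x y h' => obtain ⟨f, hf, rfl⟩ := h'; exact h f hf x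
  | refl x => exact T.refl x
  | symm x y _ ih => exact T.symm ih
  | trans x y z _ _ i1 i2 => exact T.trans i1 i2

lemma orbit_mono {G G' : Set (F → F)} (h : G ⊆ G') : orbitSetoid G ≤ orbitSetoid G' :=
  orbit_le fun _ hg a => orbit_gen (h hg) a

/-- setoid of membership in a set -/
lemma orbit_inv {G : Set (F → F)} {K : Set F} (h : ∀ g ∈ G, ∀ a, a ∈ K ↔ g a ∈ K) {a b : F}
    (hab : orbitSetoid G a b) : a ∈ K ↔ b ∈ K := by
  have : orbitSetoid G ≤ (⟨fun a b => (a ∈ K ↔ b ∈ K),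
    ⟨fun _ => Iff.rfl, fun h => h.symm, fun h k => h.trans k⟩⟩ : Setoid F) := orbit_le h
  exact this hab

/-- fixed-point-free involution -/
def Fpf (g : F → F) : Prop := Function.Involutive g ∧ ∀ x, g x ≠ x

structure Switch (c c' : F → F) (p q r s : F) : Prop where
  c1 : c p = q
  c2 : c q = p
  c3 : c r = s
  c4 : c s = r
  d1 : c' p = r
  d2 : c' r = p
  d3 : c' q = s
  d4 : c' s = q
  eq : ∀ z, z ≠ p → z ≠ q → z ≠ r → z ≠ s → c z = c' z

lemma Switch.symm {c c' : F → F} {p q r s : F} (h : Switch c c' p q r s) :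
    Switch c' c p r q s := 
  ⟨h.d1, h.d2, h.d3, h.d4, h.c1, h.c2, h.c3, h.c4, fun z a b c d => (h.eq z a c b d).symm⟩

lemma Switch.glue_le {c c' : F → F} {p q r s : F} (h : Switch c c' p q r s) (G : Set (F → F)) :
    glue (orbitSetoid (insert c G)) p r ≤ glue (orbitSetoid (insert c' G)) p q := by
  set T := glue (orbitSetoid (insert c' G)) p q with hT
  have hpq : T p q := glue_rel _ _ _
  have hc' : ∀ a, T a (c' a) := fun a => le_glue _ _ _ (orbit_gen (Set.mem_insert _ _) a)
  have hpr : T p r := h.d1 ▸ hc' p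
  have hqs : T q s := h.d3 ▸ hc' q
  have hrs : T r s := T.trans (T.symm hpr) (T.trans hpq hqs)
  refine PreHypermap.glue_le (orbit_le ?_) hpr
  rintro g (rfl | hg) a
  · by_cases h1 : a = p
    · subst h1; rw [h.c1]; exact hpq
    by_cases h2 : a = q
    · subst h2; rw [h.c2]; exact T.symm hpq
    by_cases h3 : a = r
    · subst h3; rw [h.c3]; exact hrs
    by_cases h4 : a = s
    · subst h4; rw [h.c4]; exact T.symm hrs
    rw [h.eq a h1 h2 h3 h4]; exact hc' a
  · exact le_glue _ _ _ (orbit_gen (Set.mem_insert_of_mem _ hg) a)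

lemma Switch.glue_eq {c c' : F → F} {p q r s : F} (h : Switch c c' p q r s) (G : Set (F → F)) :
    glue (orbitSetoid (insert c G)) p r = glue (orbitSetoid (insert c' G)) p q :=
  le_antisymm (h.glue_le G) (h.symm.glue_le G)

lemma Switch.count_le [Finite F] {c c' : F → F} {p q r s : F} (h : Switch c c' p q r s)
    (G : Set (F → F)) : orbitCount (insert c G) ≤ orbitCount (insert c' G) + 1 := by
  have h1 := card_glue_le (orbitSetoid (insert c G)) p r
  rw [h.glue_eq] at h1
  have h2 := card_le_of_le (le_glue (orbitSetoid (insert c' G)) p q)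
  unfold orbitCount; omega

lemma Switch.count_ge [Finite F] {c c' : F → F} {p q r s : F} (h : Switch c c' p q r s)
    (G : Set (F → F)) (hpq : orbitSetoid (insert c' G) p q) :
    orbitCount (insert c' G) ≤ orbitCount (insert c G) := by
  have h1 := h.glue_eq G
  rw [PreHypermap.glue_eq hpq] at h1
  have h2 := card_le_of_le (le_glue (orbitSetoid (insert c G)) p r)
  rw [h1] at h2
  exact h2

/-- parity: the number of elements of an invariant finite set is congruent to the fixed points -/
lemma parity_fix (T : Finset F) (g : F → F) (hg : Function.Involutive g)
    (hT : ∀ a ∈ T, g a ∈ T) : (T.card : ZMod 2) = ((T.filter (fun a => g a = a)).card : ZMod 2) := by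
  have h0 : ((T.filter (fun a => ¬ g a = a)).card : ZMod 2) = 0 := by
    rw [Finset.card_eq_sum_ones, Nat.cast_sum]
    refine Finset.sum_involution (fun a _ => g a) ?_ ?_ ?_ ?_
    · intro a _; exact by decide
    · intro a ha _; exact (Finset.mem_filter.1 ha).2
    · intro a ha
      rw [Finset.mem_filter] at ha ⊢
      exact ⟨hT a ha.1, fun k => ha.2 (by rw [hg a] at k; exact k.symm)⟩
    · intro a _; exact hg a
  rw [← Finset.card_filter_add_card_filter_not (s := T) (fun a => g a = a), Nat.cast_add, h0, add_zero]

lemma Switch.rel [Finite F] {c c' b : F → F} {p q r s : F} (h : Switch c c' p q r s)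
    (hb : Fpf b) (hc' : Fpf c') (hpq : ¬ orbitSetoid ({c', b} : Set (F → F)) p q) :
    orbitSetoid ({c, b} : Set (F → F)) p r := by
  have := Fintype.ofFinite F
  have hps : ¬ orbitSetoid ({c', b} : Set (F → F)) p s := fun k =>
    hpq (Setoid.trans' _ k (h.d4 ▸ orbit_gen (Set.mem_insert _ _) s))
  -- c₀
  let c0 : F → F := fun z => if z = p ∨ z = q ∨ z = r ∨ z = s then z else c' z
  have hc0 : Function.Involutive c0 := by
    intro z
    by_cases hz : z = p ∨ z = q ∨ z = r ∨ z = s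
    · simp only [c0, if_pos hz]
    · have : ¬ (c' z = p ∨ c' z = q ∨ c' z = r ∨ c' z = s) := by
        intro k
        have e := hc'.1 z
        rcases k with k | k | k | k <;> rw [k] at e
        · exact hz (by rw [← e, h.d1]; tauto)
        · exact hz (by rw [← e, h.d3]; tauto)
        · exact hz (by rw [← e, h.d2]; tauto)
        · exact hz (by rw [← e, h.d4]; tauto)
      simp only [c0, if_neg hz, if_neg this, hc'.1 z]
  set S0 := orbitSetoid ({c0, b} : Set (F → F)) with hS0
  have le1 : S0 ≤ orbitSetoid ({c, b} : Set (F → F)) := by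
    refine orbit_le ?_
    rintro g (rfl | rfl) a
    · by_cases hz : a = p ∨ a = q ∨ a = r ∨ a = s
      · simp only [c0, if_pos hz]; exact Setoid.refl' _ a
      · simp only [c0, if_neg hz]
        have hz' := hz
        push Not at hz
        rw [← h.eq a hz.1 hz.2.1 hz.2.2.1 hz.2.2.2]
        exact orbit_gen (by simp) a
    · exact orbit_gen (by simp) a
  have le2 : S0 ≤ orbitSetoid ({c', b} : Set (F → F)) := by
    refine orbit_le ?_
    rintro g (rfl | rfl) a
    · by_cases hz : a = p ∨ a = q ∨ a = r ∨ a = s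
      · simp only [c0, if_pos hz]; exact Setoid.refl' _ a
      · simp only [c0, if_neg hz]
        exact orbit_gen (by simp) a
    · exact orbit_gen (by simp) a
  apply le1
  by_contra hr
  let T : Finset F := Finset.univ.filter (fun z => S0 p z)
  have e1 := parity_fix T b hb.1 (by
    intro a ha
    simp only [T, Finset.mem_filter, Finset.mem_univ, true_and] at ha ⊢
    exact S0.trans ha (orbit_gen (by simp) a))
  have e2 := parity_fix T c0 hc0 (by
    intro a ha
    simp only [T, Finset.mem_filter, Finset.mem_univ, true_and] at ha ⊢
    exact S0.trans ha (orbit_gen (by simp) a))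
  have f1 : T.filter (fun a => b a = a) = ∅ := by
    ext a; simp [hb.2 a]
  have f2 : T.filter (fun a => c0 a = a) = {p} := by
    ext a
    simp only [T, Finset.mem_filter, Finset.mem_univ, true_and, Finset.mem_singleton]
    constructor
    · rintro ⟨ha, hfix⟩
      by_cases hz : a = p ∨ a = q ∨ a = r ∨ a = s
      · rcases hz with k | k | k | k <;> subst k
        · rfl
        · exact absurd (le2 ha) hpq
        · exact absurd ha hr
        · exact absurd (le2 ha) hps
      · simp only [c0, if_neg hz] at hfix
        exact absurd hfix (hc'.2 a)
    · rintro rfl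
      exact ⟨S0.refl _, by simp [c0]⟩
  rw [f1] at e1
  rw [f2] at e2
  rw [e1] at e2
  simp at e2

lemma Switch.drop [Finite F] {c c' b : F → F} {p q r s : F} (h : Switch c c' p q r s)
    (hb : Fpf b) (hc' : Fpf c') {G : Set (F → F)} (hG : b ∈ G)
    (hpq : ¬ orbitSetoid (insert c' G) p q) :
    orbitCount (insert c' G) = orbitCount (insert c G) + 1 := by
  have hsub : ∀ d : F → F, ({d, b} : Set (F → F)) ⊆ insert d G := by
    rintro d g (rfl | rfl)
    · simp
    · simp [hG]
  have hrel : orbitSetoid (insert c G) p r :=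
    orbit_mono (hsub c) (h.rel hb hc' (fun k => hpq (orbit_mono (hsub c') k)))
  unfold orbitCount
  rw [card_glue hpq, ← h.glue_eq G, PreHypermap.glue_eq hrel]

lemma count_single [Finite F] {a : F → F} (ha : Fpf a) :
    2 * orbitCount ({a} : Set (F → F)) = Nat.card F := by
  have := Fintype.ofFinite F
  have key : ∀ x z, orbitSetoid ({a} : Set (F → F)) x z ↔ (z = x ∨ z = a x) := by
    intro x z
    constructor
    · intro k
      have := orbit_inv (K := {z | z = x ∨ z = a x}) (G := {a}) (by
        rintro g rfl w
        simp only [Set.mem_ofPred_eq]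
        constructor
        · rintro (rfl | rfl)
          · simp
          · rw [ha.1]; simp
        · rintro (k | k)
          · right; rw [← k, ha.1]
          · left; exact ha.1.injective k) k
      exact this.1 (by simp)
    · rintro (rfl | rfl)
      · exact Setoid.refl' _ _
      · exact orbit_gen (G := {a}) (Set.mem_singleton a) x
  have : Fintype.card F = ∑ c : Quotient (orbitSetoid ({a} : Set (F → F))), 2 := by
    rw [← Finset.card_univ, Finset.card_eq_sum_card_fiberwise
      (f := fun z => Quotient.mk (orbitSetoid ({a} : Set (F → F))) z) (t := Finset.univ) (by simp)]
    refine Finset.sum_congr rfl ?_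
    intro c hcu
    clear hcu
    induction c using Quotient.inductionOn
    rename_i x
    rw [Finset.card_eq_two]
    refine ⟨x, a x, (ha.2 x).symm, ?_⟩
    ext z
    simp only [Finset.mem_filter, Finset.mem_univ, true_and, Finset.mem_insert,
      Finset.mem_singleton]
    rw [← key x z]
    exact ⟨fun k => Setoid.symm' _ (Quotient.exact k), fun k => Quotient.sound (Setoid.symm' _ k)⟩
  unfold orbitCount
  rw [Nat.card_eq_fintype_card, Nat.card_eq_fintype_card, this]
  simp [mul_comm]

theorem genus_aux [Finite F] {a b : F → F} (ha : Fpf a) (hb : Fpf b) (n : ℕ) :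
    ∀ c : F → F, Fpf c → {z | c z ≠ a z}.ncard = n →
    2 * (orbitCount ({c, a} : Set (F → F)) + orbitCount ({c, b} : Set (F → F))
      + orbitCount ({a, b} : Set (F → F))) ≤ Nat.card F
      + 4 * orbitCount ({c, a, b} : Set (F → F)) := by
  induction n using Nat.strong_induction_on with
  | _ n ih =>
  intro c hc hn
  by_cases hca : c = a
  · subst hca
    have := count_single hc
    simp only [Set.insert_idem, Set.pair_eq_singleton]
    omega
  obtain ⟨p, hp⟩ : ∃ p, c p ≠ a p := by
    by_contra k; push Not at k; exact hca (funext k)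
  have ia := ha.1.injective
  have ic := hc.1.injective
  -- points
  have n1 : p ≠ c p := (hc.2 p).symm
  have n2 : p ≠ a p := (ha.2 p).symm
  have n3 : p ≠ c (a p) := fun k => hp (by rw [k, hc.1, ← k])
  have n4 : c p ≠ c (a p) := fun k => n2 (ic k)
  have n5 : a p ≠ c (a p) := (hc.2 _).symm
  let c' : F → F := fun z => if z = p then a p else if z = a p then p else
    if z = c p then c (a p) else if z = c (a p) then c p else c z
  have d1 : c' p = a p := by simp [c']
  have d2 : c' (a p) = p := by simp [c', n2.symm]
  have d3 : c' (c p) = c (a p) := by simp [c', n1.symm, hp]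
  have d4 : c' (c (a p)) = c p := by simp [c', n3.symm, n5.symm, n4.symm]
  have de : ∀ z, z ≠ p → z ≠ c p → z ≠ a p → z ≠ c (a p) → c z = c' z := by
    intro z z1 z2 z3 z4; simp [c', z1, z2, z3, z4]
  have sw : Switch c c' p (c p) (a p) (c (a p)) :=
    ⟨rfl, hc.1 p, rfl, hc.1 _, d1, d2, d3, d4, de⟩
  have hc' : Fpf c' := by
    constructor
    · intro z
      by_cases z1 : z = p
      · subst z1; rw [d1, d2]
      by_cases z2 : z = c p
      · subst z2; rw [d3, d4]
      by_cases z3 : z = a p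
      · subst z3; rw [d2, d1]
      by_cases z4 : z = c (a p)
      · subst z4; rw [d4, d3]
      rw [← de z z1 z2 z3 z4, ← de, hc.1]
      · intro k; exact z2 (by rw [← k, hc.1])
      · exact fun k => z1 (ic k)
      · intro k; exact z4 (by rw [← k, hc.1])
      · exact fun k => z3 (ic k)
    · intro z
      by_cases z1 : z = p
      · subst z1; rw [d1]; exact n2.symm
      by_cases z2 : z = c p
      · subst z2; rw [d3]; exact n4.symm
      by_cases z3 : z = a p
      · subst z3; rw [d2]; exact n2
      by_cases z4 : z = c (a p)
      · subst z4; rw [d4]; exact n4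
      rw [← de z z1 z2 z3 z4]; exact hc.2 z
  have hlt : {z | c' z ≠ a z}.ncard < n := by
    rw [← hn]
    refine Set.ncard_lt_ncard ?_ (Set.toFinite _)
    rw [Set.ssubset_iff_of_subset]
    · exact ⟨p, hp, by simp [d1]⟩
    · intro z hz
      simp only [Set.mem_ofPred_eq] at hz ⊢
      by_cases z1 : z = p
      · subst z1; exact hp
      by_cases z2 : z = c p
      · subst z2; rw [hc.1]; intro k; exact hp (by rw [k, ha.1, ← k])
      by_cases z3 : z = a p
      · subst z3; rw [ha.1]; exact n3.symm
      by_cases z4 : z = c (a p)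
      · subst z4; rw [hc.1]; intro k; exact n3 (ia k)
      rw [de z z1 z2 z3 z4]; exact hz
  have IH := ih _ hlt c' hc' rfl
  have A : orbitCount ({c', a} : Set (F → F)) = orbitCount ({c, a} : Set (F → F)) + 1 := by
    refine sw.drop ha hc' (G := {a}) rfl ?_
    intro k
    have := orbit_inv (K := {z | z = p ∨ z = a p}) (by
      rintro g (rfl | rfl) w
      · simp only [Set.mem_ofPred_eq]
        constructor
        · rintro (rfl | rfl)
          · simp [d1]
          · simp [d2]
        · rintro (k | k)
          · right; rw [← hc'.1 w, k, d1]
          · left; rw [← hc'.1 w, k, d2]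
      · simp only [Set.mem_ofPred_eq]
        constructor
        · rintro (rfl | rfl)
          · simp
          · rw [ha.1]; simp
        · rintro (k | k)
          · right; rw [← k, ha.1]
          · left; exact ha.1.injective k) k
    rcases this.1 (by simp) with k | k
    · exact n1 k.symm
    · exact hp k
  by_cases hpq : orbitSetoid ({c', a, b} : Set (F → F)) p (c p)
  · have B := sw.count_le {b}
    have C := sw.count_ge {a, b} hpq
    omega
  · have C := sw.drop ha hc' (G := {a, b}) (by simp) hpq
    have B := sw.drop hb hc' (G := {b}) (by simp) (fun k => hpq (orbit_mono (by
      rintro g (rfl | rfl) <;> simp) k))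
    omega

theorem genus_nonneg [Finite F] (H : PreHypermap F) (h : H.IsHypermap) : 0 ≤ H.eulerGenus := by
  have g := genus_aux (h 0) (h 2) _ (H.theta 1) (h 1) rfl
  have e := count_single (h 0)
  unfold eulerGenus chi v PreHypermap.e f c
  rw [Set.pair_comm (H.theta 0) (H.theta 1), Set.insert_comm (H.theta 0) (H.theta 1)]
  omega

section sums
variable {F₁ F₂ : Type*}

def sumGen (P : Set ((F₁ → F₁) × (F₂ → F₂))) : Set (F₁ ⊕ F₂ → F₁ ⊕ F₂) :=
  (fun p => Sum.map p.1 p.2) '' P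

/-- disjoint sum of setoids -/
def sumSetoid (S : Setoid F₁) (T : Setoid F₂) : Setoid (F₁ ⊕ F₂) where
  r := Sum.LiftRel S T
  iseqv := by
    refine ⟨?_, ?_, ?_⟩
    · rintro (a | a)
      · exact .inl (S.refl a)
      · exact .inr (T.refl a)
    · rintro _ _ (h | h)
      · exact .inl (S.symm h)
      · exact .inr (T.symm h)
    · rintro _ _ _ (h | h) k
      · cases k with | inl k => exact .inl (S.trans h k)
      · cases k with | inr k => exact .inr (T.trans h k)

lemma sum_orbit (P : Set ((F₁ → F₁) × (F₂ → F₂))) :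
    orbitSetoid (sumGen P) = sumSetoid (orbitSetoid (Prod.fst '' P)) (orbitSetoid (Prod.snd '' P)) := by
  apply le_antisymm
  · refine orbit_le ?_
    rintro _ ⟨g, hg, rfl⟩ (a | a)
    · exact .inl (orbit_gen (G := Prod.fst '' P) (g := g.1) (Set.mem_image_of_mem _ hg) a)
    · exact .inr (orbit_gen (G := Prod.snd '' P) (g := g.2) (Set.mem_image_of_mem _ hg) a)
  · rintro _ _ (h | h)
    · rename_i a b
      have : orbitSetoid (Prod.fst '' P) ≤ (orbitSetoid (sumGen P)).comap Sum.inl := by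
        refine orbit_le ?_
        rintro _ ⟨g, hg, rfl⟩ a
        exact orbit_gen (G := sumGen P) ⟨g, hg, rfl⟩ (Sum.inl a)
      exact this h
    · rename_i a b
      have : orbitSetoid (Prod.snd '' P) ≤ (orbitSetoid (sumGen P)).comap Sum.inr := by
        refine orbit_le ?_
        rintro _ ⟨g, hg, rfl⟩ a
        exact orbit_gen (G := sumGen P) ⟨g, hg, rfl⟩ (Sum.inr a)
      exact this h

lemma sum_count [Finite F₁] [Finite F₂] (P : Set ((F₁ → F₁) × (F₂ → F₂))) :
    orbitCount (sumGen P) = orbitCount (Prod.fst '' P) + orbitCount (Prod.snd '' P) := by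
  unfold orbitCount
  rw [sum_orbit, ← Nat.card_sum]
  generalize orbitSetoid (Prod.fst '' P) = S
  generalize orbitSetoid (Prod.snd '' P) = T
  symm
  let m : Quotient S ⊕ Quotient T → Quotient (sumSetoid S T) := Sum.elim
    (Quotient.map' (s₁ := S) (s₂ := sumSetoid S T) Sum.inl (fun a b h => Sum.LiftRel.inl h))
    (Quotient.map' (s₁ := T) (s₂ := sumSetoid S T) Sum.inr (fun a b h => Sum.LiftRel.inr h))
  refine Nat.card_congr (Equiv.ofBijective m ⟨?_, ?_⟩)
  · rintro (a | a) (b | b) hab <;> induction a using Quotient.inductionOn <;>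
      induction b using Quotient.inductionOn <;> rename_i a b <;>
      have k := Quotient.exact hab <;> cases k
    · rename_i k; exact congrArg Sum.inl (Quotient.sound k)
    · rename_i k; exact congrArg Sum.inr (Quotient.sound k)
  · intro c
    induction c using Quotient.inductionOn
    rename_i a
    rcases a with a | a
    · exact ⟨Sum.inl (Quotient.mk _ a), rfl⟩
    · exact ⟨Sum.inr (Quotient.mk _ a), rfl⟩

lemma Fpf.sum {g : F₁ → F₁} {h : F₂ → F₂} (hg : Fpf g) (hh : Fpf h) : Fpf (Sum.map g h) := by
  constructor
  · rintro (a | a)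
    · simp [hg.1 a]
    · simp [hh.1 a]
  · rintro (a | a)
    · simp [hg.2 a]
    · simp [hh.2 a]

theorem genus_join [Finite F₁] [Finite F₂] (H₁ : PreHypermap F₁) (H₂ : PreHypermap F₂)
    (h₁ : H₁.IsHypermap) (h₂ : H₂.IsHypermap) (x : F₁) (y : F₂) :
    (join H₁ H₂ x y).eulerGenus = H₁.eulerGenus + H₂.eulerGenus := by
  set J := join H₁ H₂ x y with hJ
  have t0 : J.theta 0 = Sum.map (H₁.theta 0) (H₂.theta 0) := by
    funext z; simp [hJ, join]
  have t2 : J.theta 2 = Sum.map (H₁.theta 2) (H₂.theta 2) := by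
    funext z; simp [hJ, join]
  set c' := Sum.map (H₁.theta 1) (H₂.theta 1) with hc'
  have n1 := (h₁ 1).2 x
  have n2 := (h₂ 1).2 y
  have sw : Switch (J.theta 1) c' (Sum.inl x) (Sum.inr y) (Sum.inl (H₁.theta 1 x))
      (Sum.inr (H₂.theta 1 y)) := by
    refine ⟨?_, ?_, ?_, ?_, ?_, ?_, ?_, ?_, ?_⟩
    · simp [hJ, join]
    · simp [hJ, join]
    · simp [hJ, join, n1]
    · simp [hJ, join, n2]
    · simp [hc']
    · simp [hc', (h₁ 1).1 x]
    · simp [hc']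
    · simp [hc', (h₂ 1).1 y]
    · intro z z1 z2 z3 z4
      simp [hJ, join, hc', z1, z2, z3, z4]
  have F0 : Fpf (J.theta 0) := t0 ▸ Fpf.sum (h₁ 0) (h₂ 0)
  have F2 : Fpf (J.theta 2) := t2 ▸ Fpf.sum (h₁ 2) (h₂ 2)
  have Fc : Fpf c' := Fpf.sum (h₁ 1) (h₂ 1)
  have im2 : ∀ i j : Fin 3, ({Sum.map (H₁.theta i) (H₂.theta i), Sum.map (H₁.theta j) (H₂.theta j)}
      : Set (F₁ ⊕ F₂ → F₁ ⊕ F₂)) = sumGen {(H₁.theta i, H₂.theta i), (H₁.theta j, H₂.theta j)} := by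
    intro i j; simp [sumGen, Set.image_insert_eq]
  have im3 : ∀ i j k : Fin 3, ({Sum.map (H₁.theta i) (H₂.theta i), Sum.map (H₁.theta j) (H₂.theta j),
      Sum.map (H₁.theta k) (H₂.theta k)}
      : Set (F₁ ⊕ F₂ → F₁ ⊕ F₂)) = sumGen {(H₁.theta i, H₂.theta i), (H₁.theta j, H₂.theta j),
        (H₁.theta k, H₂.theta k)} := by
    intro i j k; simp [sumGen, Set.image_insert_eq]
  have nr : ¬ orbitSetoid ({c', J.theta 0, J.theta 2} : Set _) (Sum.inl x) (Sum.inr y) := by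
    rw [t0, t2, hc', im3, sum_orbit]
    intro k
    cases k
  have C := sw.drop F0 Fc (G := {J.theta 0, J.theta 2}) (by simp) nr
  have V := sw.drop F2 Fc (G := {J.theta 2}) (by simp) (fun k => nr (orbit_mono (by
      rintro g (rfl | rfl) <;> simp) k))
  have Fa := sw.drop F0 Fc (G := {J.theta 0}) (by simp) (fun k => nr (orbit_mono (by
      rintro g (rfl | rfl) <;> simp) k))
  have E : orbitCount {J.theta 0, J.theta 2} = H₁.e + H₂.e := by
    rw [t0, t2, im2, sum_count]; simp [e, Set.image_insert_eq]
  rw [t0, hc', im2, sum_count] at Fa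
  rw [t2, hc', im2, sum_count] at V
  rw [t0, t2, hc', im3, sum_count] at C
  simp only [Set.image_insert_eq, Set.image_singleton] at Fa V C
  rw [← t2] at V
  rw [← t0] at Fa
  rw [← t0, ← t2] at C
  have e1 := count_single (h₁ 0)
  have e2 := count_single (h₂ 0)
  unfold eulerGenus chi
  rw [Nat.card_sum]
  unfold v e f c
  unfold e at E
  rw [Set.pair_comm (J.theta 0) (J.theta 1), Set.insert_comm (J.theta 0) (J.theta 1),
    Set.pair_comm (H₁.theta 0) (H₁.theta 1), Set.insert_comm (H₁.theta 0) (H₁.theta 1),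
    Set.pair_comm (H₂.theta 0) (H₂.theta 1), Set.insert_comm (H₂.theta 0) (H₂.theta 1)]
  omega

lemma edge_inv {F : Type*} (H : PreHypermap F) {A : Set (Set F)} (hA : A ⊆ H.edges)
    (i : Fin 3) (hi : i ≠ 1) (hI : Function.Involutive (H.theta i)) (a : F) :
    H.theta i a ∈ ⋃₀ A ↔ a ∈ ⋃₀ A := by
  have : ∀ a, a ∈ ⋃₀ A → H.theta i a ∈ ⋃₀ A := by
    rintro a ⟨s, hs, has⟩
    refine ⟨s, hs, ?_⟩
    obtain ⟨z, rfl⟩ := hA hs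
    have k : orbitSetoid {H.theta 0, H.theta 2} z a := has
    exact Setoid.trans' _ k (orbit_gen (by fin_cases i <;> simp_all) a)
  exact ⟨fun k => hI a ▸ this _ k, this a⟩

lemma pdual_hypermap {F : Type*} (H : PreHypermap F) (h : H.IsHypermap) {A : Set (Set F)}
    (hA : A ⊆ H.edges) : (H.pdual (⋃₀ A)).IsHypermap := by
  intro i
  by_cases hi : i = 1
  · subst hi
    have : (H.pdual (⋃₀ A)).theta 1 = H.theta 1 := by funext z; simp [pdual]
    rw [this]; exact h 1
  have hi' : (2 - i) ≠ 1 := by revert hi; revert i; decide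
  have I1 := edge_inv H hA i hi (h i).1
  have I2 := edge_inv H hA (2 - i) hi' (h (2 - i)).1
  constructor
  · intro z
    by_cases hz : z ∈ ⋃₀ A
    · have := (I2 z).2 hz
      simp only [pdual, if_neg hi, if_pos hz, if_pos this]
      exact (h _).1 z
    · have := fun k => hz ((I1 z).1 k)
      simp only [pdual, if_neg hi, if_neg hz, if_neg this]
      exact (h _).1 z
  · intro z
    by_cases hz : z ∈ ⋃₀ A
    · simp only [pdual, if_neg hi, if_pos hz]
      exact (h _).2 z
    · simp only [pdual, if_neg hi, if_neg hz]
      exact (h _).2 z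

lemma pdual_join (H₁ : PreHypermap F₁) (H₂ : PreHypermap F₂) (x : F₁) (y : F₂)
    (S : Set (F₁ ⊕ F₂)) :
    (join H₁ H₂ x y).pdual S =
      join (H₁.pdual (Sum.inl ⁻¹' S)) (H₂.pdual (Sum.inr ⁻¹' S)) x y := by
  unfold join pdual
  congr 1
  funext i z
  by_cases hi : i = 1
  · subst hi; simp
  · have hi' : (2 - i) ≠ 1 := by revert hi; revert i; decide
    rcases z with z | z
    · by_cases hz : Sum.inl z ∈ S <;> simp [hi, hi', hz]
    · by_cases hz : Sum.inr z ∈ S <;> simp [hi, hi', hz]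

lemma edges_join (H₁ : PreHypermap F₁) (H₂ : PreHypermap F₂) (x : F₁) (y : F₂) :
    (join H₁ H₂ x y).edges =
      (Set.image Sum.inl '' H₁.edges) ∪ (Set.image Sum.inr '' H₂.edges) := by
  have t : ({(join H₁ H₂ x y).theta 0, (join H₁ H₂ x y).theta 2} : Set _) =
      sumGen {(H₁.theta 0, H₂.theta 0), (H₁.theta 2, H₂.theta 2)} := by
    have t0 : (join H₁ H₂ x y).theta 0 = Sum.map (H₁.theta 0) (H₂.theta 0) := by
      funext z; simp [join]
    have t2 : (join H₁ H₂ x y).theta 2 = Sum.map (H₁.theta 2) (H₂.theta 2) := by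
      funext z; simp [join]
    rw [t0, t2]; simp [sumGen, Set.image_insert_eq]
  have key : ∀ a b, orbitRel {(join H₁ H₂ x y).theta 0, (join H₁ H₂ x y).theta 2} a b ↔
      Sum.LiftRel (orbitRel {H₁.theta 0, H₁.theta 2}) (orbitRel {H₂.theta 0, H₂.theta 2}) a b := by
    intro a b
    change orbitSetoid _ a b ↔ _
    have i1 : Prod.fst '' ({(H₁.theta 0, H₂.theta 0), (H₁.theta 2, H₂.theta 2)} :
        Set ((F₁ → F₁) × (F₂ → F₂))) = {H₁.theta 0, H₁.theta 2} := by
      simp [Set.image_insert_eq]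
    have i2 : Prod.snd '' ({(H₁.theta 0, H₂.theta 0), (H₁.theta 2, H₂.theta 2)} :
        Set ((F₁ → F₁) × (F₂ → F₂))) = {H₂.theta 0, H₂.theta 2} := by
      simp [Set.image_insert_eq]
    rw [t, sum_orbit, i1, i2]
    exact Iff.rfl
  have kl : ∀ a, {b | orbitRel {(join H₁ H₂ x y).theta 0, (join H₁ H₂ x y).theta 2} (Sum.inl a) b}
      = Sum.inl '' {b | orbitRel {H₁.theta 0, H₁.theta 2} a b} := by
    intro a; ext (b | b) <;> simp [key]
  have kr : ∀ a, {b | orbitRel {(join H₁ H₂ x y).theta 0, (join H₁ H₂ x y).theta 2} (Sum.inr a) b}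
      = Sum.inr '' {b | orbitRel {H₂.theta 0, H₂.theta 2} a b} := by
    intro a; ext (b | b) <;> simp [key]
  ext s
  constructor
  · rintro ⟨a | a, rfl⟩
    · exact Or.inl ⟨_, ⟨a, rfl⟩, (kl a).symm⟩
    · exact Or.inr ⟨_, ⟨a, rfl⟩, (kr a).symm⟩
  · rintro (⟨_, ⟨a, rfl⟩, rfl⟩ | ⟨_, ⟨a, rfl⟩, rfl⟩)
    · exact ⟨Sum.inl a, (kl a).symm⟩
    · exact ⟨Sum.inr a, (kr a).symm⟩

lemma edge_nonempty {F : Type*} {H : PreHypermap F} {s : Set F} (h : s ∈ H.edges) : s.Nonempty := by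
  obtain ⟨a, rfl⟩ := h
  exact ⟨a, Relation.EqvGen.refl a⟩

end sums

end PreHypermap

open PreHypermap in
/-- The partial-dual Euler-genus polynomial is multiplicative under join:
`∂ε_(H₁ ∨ H₂)(z) = ∂ε_(H₁)(z) · ∂ε_(H₂)(z)`. -/
theorem statement_12 {F₁ F₂ : Type} [Fintype F₁] [Fintype F₂]
    (H₁ : PreHypermap F₁) (H₂ : PreHypermap F₂)
    (h₁ : H₁.IsHypermap) (h₂ : H₂.IsHypermap)
    (hc₁ : H₁.Connected) (hc₂ : H₂.Connected) (x : F₁) (y : F₂) :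
    (join H₁ H₂ x y).pdPoly = H₁.pdPoly * H₂.pdPoly := by
  have m1 : ∀ s, s ∈ H₁.edgeFinset ↔ s ∈ H₁.edges := fun s => by simp [edgeFinset]
  have m2 : ∀ s, s ∈ H₂.edgeFinset ↔ s ∈ H₂.edges := fun s => by simp [edgeFinset]
  have mJ : ∀ s, s ∈ (join H₁ H₂ x y).edgeFinset ↔ s ∈ (join H₁ H₂ x y).edges :=
    fun s => by simp [edgeFinset]
  have il : Function.Injective (Set.image (Sum.inl : F₁ → F₁ ⊕ F₂)) :=
    Set.image_injective.2 Sum.inl_injective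
  have ir : Function.Injective (Set.image (Sum.inr : F₂ → F₁ ⊕ F₂)) :=
    Set.image_injective.2 Sum.inr_injective
  have dis : ∀ (s : Set F₁) (t : Set F₂), s.Nonempty →
      (Sum.inl '' s : Set (F₁ ⊕ F₂)) ≠ Sum.inr '' t := by
    rintro s t ⟨a, ha⟩ k
    have : (Sum.inl a : F₁ ⊕ F₂) ∈ Sum.inr '' t := k ▸ ⟨a, ha, rfl⟩
    simp at this
  unfold pdPoly
  rw [Finset.sum_mul_sum, ← Finset.sum_product']
  symm
  refine Finset.sum_bij (fun A _ => A.1.image (Set.image Sum.inl) ∪ A.2.image (Set.image Sum.inr))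
    ?_ ?_ ?_ ?_
  · rintro ⟨A, B⟩ h
    simp only [Finset.mem_product, Finset.mem_powerset] at h ⊢
    intro s hs
    rw [mJ, edges_join]
    simp only [Finset.mem_union, Finset.mem_image] at hs
    rcases hs with ⟨t, ht, rfl⟩ | ⟨t, ht, rfl⟩
    · exact Or.inl ⟨t, (m1 t).1 (h.1 ht), rfl⟩
    · exact Or.inr ⟨t, (m2 t).1 (h.2 ht), rfl⟩
  · rintro ⟨A, B⟩ h ⟨A', B'⟩ h' k
    simp only [Finset.mem_product, Finset.mem_powerset] at h h' k
    have aux1 : ∀ (A : Finset (Set F₁)) (B : Finset (Set F₂)) (A' : Finset (Set F₁)) (B' : Finset (Set F₂)), A ⊆ H₁.edgeFinset → 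
        A.image (Set.image Sum.inl) ∪ B.image (Set.image Sum.inr) =
        A'.image (Set.image (Sum.inl : F₁ → F₁ ⊕ F₂)) ∪ B'.image (Set.image Sum.inr) → A ⊆ A' := by
      intro A B A' B' hA k s hs
      have : Sum.inl '' s ∈ A'.image (Set.image (Sum.inl : F₁ → F₁ ⊕ F₂)) ∪
          B'.image (Set.image Sum.inr) := by
        rw [← k]; exact Finset.mem_union_left _ (Finset.mem_image_of_mem _ hs)
      simp only [Finset.mem_union, Finset.mem_image] at this
      rcases this with ⟨t, ht, e⟩ | ⟨t, ht, e⟩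
      · exact il e ▸ ht
      · exact absurd e.symm (dis s t (edge_nonempty ((m1 s).1 (hA hs))))
    have aux2 : ∀ (A : Finset (Set F₁)) (B : Finset (Set F₂)) (A' : Finset (Set F₁)) (B' : Finset (Set F₂)), A' ⊆ H₁.edgeFinset → 
        A.image (Set.image Sum.inl) ∪ B.image (Set.image Sum.inr) =
        A'.image (Set.image (Sum.inl : F₁ → F₁ ⊕ F₂)) ∪ B'.image (Set.image Sum.inr) → B ⊆ B' := by
      intro A B A' B' hA k s hs
      have : Sum.inr '' s ∈ A'.image (Set.image (Sum.inl : F₁ → F₁ ⊕ F₂)) ∪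
          B'.image (Set.image Sum.inr) := by
        rw [← k]; exact Finset.mem_union_right _ (Finset.mem_image_of_mem _ hs)
      simp only [Finset.mem_union, Finset.mem_image] at this
      rcases this with ⟨t, ht, e⟩ | ⟨t, ht, e⟩
      · exact absurd e (dis t s (edge_nonempty ((m1 t).1 (hA ht))))
      · exact ir e ▸ ht
    exact Prod.ext (Finset.Subset.antisymm (aux1 _ _ _ _ h.1 k) (aux1 _ _ _ _ h'.1 k.symm))
      (Finset.Subset.antisymm (aux2 _ _ _ _ h'.1 k) (aux2 _ _ _ _ h.1 k.symm))
  · intro C hC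
    rw [Finset.mem_powerset] at hC
    refine ⟨(H₁.edgeFinset.filter (fun s => Sum.inl '' s ∈ C),
      H₂.edgeFinset.filter (fun s => Sum.inr '' s ∈ C)), ?_, ?_⟩
    · simp
    · ext s
      simp only [Finset.mem_union, Finset.mem_image, Finset.mem_filter]
      constructor
      · rintro (⟨t, ⟨_, ht⟩, rfl⟩ | ⟨t, ⟨_, ht⟩, rfl⟩) <;> exact ht
      · intro hs
        have := (mJ s).1 (hC hs)
        rw [edges_join] at this
        rcases this with ⟨t, ht, rfl⟩ | ⟨t, ht, rfl⟩
        · exact Or.inl ⟨t, ⟨(m1 t).2 ht, hs⟩, rfl⟩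
        · exact Or.inr ⟨t, ⟨(m2 t).2 ht, hs⟩, rfl⟩
  · rintro ⟨A, B⟩ h
    simp only [Finset.mem_product, Finset.mem_powerset] at h
    have hA : (A : Set (Set F₁)) ⊆ H₁.edges := fun s hs => (m1 s).1 (h.1 hs)
    have hB : (B : Set (Set F₂)) ⊆ H₂.edges := fun s hs => (m2 s).1 (h.2 hs)
    have P1 := pdual_hypermap H₁ h₁ hA
    have P2 := pdual_hypermap H₂ h₂ hB
    have e1 : (Sum.inl ⁻¹' (⋃₀ ((A.image (Set.image Sum.inl) ∪ B.image (Set.image Sum.inr) :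
        Finset (Set (F₁ ⊕ F₂))) : Set (Set (F₁ ⊕ F₂))))) = ⋃₀ (A : Set (Set F₁)) := by
      ext a; simp [or_and_right, exists_or]
    have e2 : (Sum.inr ⁻¹' (⋃₀ ((A.image (Set.image Sum.inl) ∪ B.image (Set.image Sum.inr) :
        Finset (Set (F₁ ⊕ F₂))) : Set (Set (F₁ ⊕ F₂))))) = ⋃₀ (B : Set (Set F₂)) := by
      ext a; simp [or_and_right, exists_or]
    rw [pdual_join, e1, e2, genus_join _ _ P1 P2, Int.toNat_add (genus_nonneg _ P1)
      (genus_nonneg _ P2), pow_add]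
end

section
/- Let H₁ and H₂ be connected combinatorial hypermaps on disjoint flag sets, and let H₁ ⊕ H₂ be a bar-amalgamation of H₁ and H₂ (the connecting hyperedge meeting one corner of H₁ and one corner of H₂). Then H₁ ⊕ H₂ is connected, v(H₁ ⊕ H₂) = v(H₁) + v(H₂), e(H₁ ⊕ H₂) = e(H₁) + e(H₂) + 1, f(H₁ ⊕ H₂) = f(H₁) + f(H₂) − 1, χ(H₁ ⊕ H₂) = χ(H₁) + χ(H₂) − 2, and ε(H₁ ⊕ H₂) = ε(H₁) + ε(H₂). -/
open Classical

namespace PreHypermap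

theorem evenCard {F : Type*} (S : Finset F) (σ : F → F) (hS : ∀ a ∈ S, σ a ∈ S)
    (hi : ∀ a, σ (σ a) = a) (hf : ∀ a, σ a ≠ a) : Even S.card := by
  have h : ∑ a ∈ S, (1 : ZMod 2) = 0 :=
    Finset.sum_involution (fun a _ => σ a) (fun a _ => by decide) (fun a _ _ => hf a)
      (fun a ha => hS a ha) (fun a _ => hi a)
  rw [Finset.sum_const, nsmul_eq_mul, mul_one] at h
  exact (ZMod.natCast_eq_zero_iff_even).1 h

theorem orbitRel_refl {F : Type*} {fs : Set (F → F)} (a : F) : orbitRel fs a a :=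
  Relation.EqvGen.refl a

theorem orbitRel_symm {F : Type*} {fs : Set (F → F)} {a b : F} (h : orbitRel fs a b) :
    orbitRel fs b a := Relation.EqvGen.symm _ _ h

theorem orbitRel_trans {F : Type*} {fs : Set (F → F)} {a b c : F} (h : orbitRel fs a b)
    (h' : orbitRel fs b c) : orbitRel fs a c := Relation.EqvGen.trans _ _ _ h h'

theorem orbitRel_step {F : Type*} {fs : Set (F → F)} {f : F → F} (hf : f ∈ fs) {a b : F}
    (h : f a = b) : orbitRel fs a b := Relation.EqvGen.rel _ _ ⟨f, hf, h⟩

/-- the class of a flag -/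
def cls {F : Type*} (fs : Set (F → F)) (a : F) : Quotient (orbitSetoid fs) :=
  Quotient.mk (orbitSetoid fs) a

theorem cls_eq {F : Type*} {fs : Set (F → F)} {a b : F} :
    cls fs a = cls fs b ↔ orbitRel fs a b :=
  ⟨fun h => Quotient.exact h, fun h => Quotient.sound h⟩

theorem cls_step {F : Type*} {fs : Set (F → F)} {f : F → F} (hf : f ∈ fs) (a : F) :
    cls fs (f a) = cls fs a := (cls_eq.2 (orbitRel_step hf rfl)).symm

theorem orbitRel_map {F G : Type*} {fs : Set (F → F)} {gs : Set (G → G)} (i : F → G)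
    (h : ∀ f ∈ fs, ∀ a, orbitRel gs (i a) (i (f a))) {a b : F} (hab : orbitRel fs a b) :
    orbitRel gs (i a) (i b) := by
  induction hab with
  | rel a b h' => obtain ⟨f, hf, rfl⟩ := h'; exact h f hf a
  | refl a => exact orbitRel_refl _
  | symm a b _ ih => exact orbitRel_symm ih
  | trans a b c _ _ ih ih' => exact orbitRel_trans ih ih'

theorem orbitCount_eq {F T : Type*} (fs : Set (F → F)) (g : F → T)
    (hg : ∀ f ∈ fs, ∀ a, g (f a) = g a) (hs : Function.Surjective g)
    (hinj : ∀ a b, g a = g b → orbitRel fs a b) : orbitCount fs = Nat.card T := by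
  have hr : ∀ a b, orbitRel fs a b → g a = g b := by
    intro a b h
    induction h with
    | rel a b h' => obtain ⟨f, hf, rfl⟩ := h'; exact (hg f hf a).symm
    | refl a => rfl
    | symm a b _ ih => exact ih.symm
    | trans a b c _ _ ih ih' => exact ih.trans ih'
  refine Nat.card_congr (Equiv.ofBijective (Quotient.lift g hr) ⟨?_, ?_⟩)
  · intro a b
    induction a using Quotient.inductionOn
    induction b using Quotient.inductionOn
    intro h
    exact Quotient.sound (hinj _ _ h)
  · intro t
    obtain ⟨a, rfl⟩ := hs t
    exact ⟨Quotient.mk _ a, rfl⟩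

section
variable {F₁ F₂ : Type} (H₁ : PreHypermap F₁) (H₂ : PreHypermap F₂) (x : F₁) (y : F₂)

theorem bar0_l (a : F₁) : (bar H₁ H₂ x y).theta 0 (.inl (.inl a)) = .inl (.inl (H₁.theta 0 a)) := by
  simp [bar]
theorem bar0_r (a : F₂) : (bar H₁ H₂ x y).theta 0 (.inl (.inr a)) = .inl (.inr (H₂.theta 0 a)) := by
  simp [bar]
theorem bar2_l (a : F₁) : (bar H₁ H₂ x y).theta 2 (.inl (.inl a)) = .inl (.inl (H₁.theta 2 a)) := by
  simp [bar]
theorem bar2_r (a : F₂) : (bar H₁ H₂ x y).theta 2 (.inl (.inr a)) = .inl (.inr (H₂.theta 2 a)) := by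
  simp [bar]
theorem bar0_k (k : Fin 4) : (bar H₁ H₂ x y).theta 0 (.inr k) = .inr (![2, 3, 0, 1] k) := by
  simp only [bar, if_true, Sum.inr.injEq]
  revert k; decide
theorem bar2_k (k : Fin 4) : (bar H₁ H₂ x y).theta 2 (.inr k) = .inr (![1, 0, 3, 2] k) := by
  have : (2 : Fin 3) ≠ 0 := by decide
  simp only [bar, if_true, Sum.inr.injEq, this, if_false]
  revert k; decide
theorem bar1_k (k : Fin 4) : (bar H₁ H₂ x y).theta 1 (.inr k) =
    ![.inl (.inl x), .inl (.inl (H₁.theta 1 x)), .inl (.inr y), .inl (.inr (H₂.theta 1 y))] k := by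
  fin_cases k <;> simp [bar]
theorem bar1_x : (bar H₁ H₂ x y).theta 1 (.inl (.inl x)) = .inr 0 := by simp [bar]
theorem bar1_x' (h : H₁.theta 1 x ≠ x) :
    (bar H₁ H₂ x y).theta 1 (.inl (.inl (H₁.theta 1 x))) = .inr 1 := by simp [bar, h]
theorem bar1_y : (bar H₁ H₂ x y).theta 1 (.inl (.inr y)) = .inr 2 := by simp [bar]
theorem bar1_y' (h : H₂.theta 1 y ≠ y) :
    (bar H₁ H₂ x y).theta 1 (.inl (.inr (H₂.theta 1 y))) = .inr 3 := by simp [bar, h]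
theorem bar1_l (a : F₁) (h : a ≠ x) (h' : a ≠ H₁.theta 1 x) :
    (bar H₁ H₂ x y).theta 1 (.inl (.inl a)) = .inl (.inl (H₁.theta 1 a)) := by simp [bar, h, h']
theorem bar1_r (a : F₂) (h : a ≠ y) (h' : a ≠ H₂.theta 1 y) :
    (bar H₁ H₂ x y).theta 1 (.inl (.inr a)) = .inl (.inr (H₂.theta 1 a)) := by simp [bar, h, h']

/-- invariance of a map under the index-1 involution -/
theorem inv1 {T : Type*} (g : (F₁ ⊕ F₂) ⊕ Fin 4 → T)
    (hl : ∀ a, g (.inl (.inl (H₁.theta 1 a))) = g (.inl (.inl a)))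
    (hr : ∀ a, g (.inl (.inr (H₂.theta 1 a))) = g (.inl (.inr a)))
    (k0 : g (.inr 0) = g (.inl (.inl x))) (k1 : g (.inr 1) = g (.inl (.inl x)))
    (k2 : g (.inr 2) = g (.inl (.inr y))) (k3 : g (.inr 3) = g (.inl (.inr y)))
    (z : (F₁ ⊕ F₂) ⊕ Fin 4) : g ((bar H₁ H₂ x y).theta 1 z) = g z := by
  rcases z with (a | a) | k
  · by_cases h : a = x
    · subst h; rw [bar1_x, k0]
    by_cases h' : a = H₁.theta 1 x
    · subst h'; rw [bar1_x' _ _ _ _ h, k1, hl]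
    rw [bar1_l _ _ _ _ _ h h', hl]
  · by_cases h : a = y
    · subst h; rw [bar1_y, k2]
    by_cases h' : a = H₂.theta 1 y
    · subst h'; rw [bar1_y' _ _ _ _ h, k3, hr]
    rw [bar1_r _ _ _ _ _ h h', hr]
  · rw [bar1_k]
    fin_cases k <;> simp [hl, hr, k0, k1, k2, k3]

/-- index-1 steps of `H₁` lift -/
theorem lift1 (h₁ : H₁.IsHypermap) {fs : Set ((F₁ ⊕ F₂) ⊕ Fin 4 → (F₁ ⊕ F₂) ⊕ Fin 4)}
    (hm : (bar H₁ H₂ x y).theta 1 ∈ fs)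
    (hx : orbitRel fs (.inl (.inl x)) (.inl (.inl (H₁.theta 1 x)))) (a : F₁) :
    orbitRel fs (.inl (.inl a)) (.inl (.inl (H₁.theta 1 a))) := by
  by_cases h : a = x
  · subst h; exact hx
  by_cases h' : a = H₁.theta 1 x
  · subst h'; rw [(h₁ 1).1 x]; exact orbitRel_symm hx
  exact orbitRel_step hm (bar1_l _ _ _ _ _ h h')

theorem lift2 (h₂ : H₂.IsHypermap) {fs : Set ((F₁ ⊕ F₂) ⊕ Fin 4 → (F₁ ⊕ F₂) ⊕ Fin 4)}
    (hm : (bar H₁ H₂ x y).theta 1 ∈ fs)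
    (hy : orbitRel fs (.inl (.inr y)) (.inl (.inr (H₂.theta 1 y)))) (a : F₂) :
    orbitRel fs (.inl (.inr a)) (.inl (.inr (H₂.theta 1 a))) := by
  by_cases h : a = y
  · subst h; exact hy
  by_cases h' : a = H₂.theta 1 y
  · subst h'; rw [(h₂ 1).1 y]; exact orbitRel_symm hy
  exact orbitRel_step hm (bar1_r _ _ _ _ _ h h')

theorem corner_x {fs : Set ((F₁ ⊕ F₂) ⊕ Fin 4 → (F₁ ⊕ F₂) ⊕ Fin 4)}
    (hm : (bar H₁ H₂ x y).theta 1 ∈ fs) (hm2 : (bar H₁ H₂ x y).theta 2 ∈ fs) :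
    orbitRel fs (.inl (.inl x)) (.inl (.inl (H₁.theta 1 x))) :=
  orbitRel_trans (orbitRel_step hm (bar1_x ..)) <| orbitRel_trans
    (orbitRel_step hm2 (bar2_k ..)) (orbitRel_step hm (bar1_k ..))

theorem corner_y {fs : Set ((F₁ ⊕ F₂) ⊕ Fin 4 → (F₁ ⊕ F₂) ⊕ Fin 4)}
    (hm : (bar H₁ H₂ x y).theta 1 ∈ fs) (hm2 : (bar H₁ H₂ x y).theta 2 ∈ fs) :
    orbitRel fs (.inl (.inr y)) (.inl (.inr (H₂.theta 1 y))) :=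
  orbitRel_trans (orbitRel_step hm (bar1_y ..)) <| orbitRel_trans
    (orbitRel_step hm2 (bar2_k ..)) (orbitRel_step hm (bar1_k ..))

theorem parity {F G : Type*} [Fintype F] (H : PreHypermap F) (h : H.IsHypermap) (x : F)
    (gs : Set (G → G)) (i : F → G)
    (h0 : ∀ a, orbitRel gs (i a) (i (H.theta 0 a)))
    (h1 : ∀ a, a ≠ x → a ≠ H.theta 1 x → orbitRel gs (i a) (i (H.theta 1 a))) :
    orbitRel gs (i x) (i (H.theta 1 x)) := by
  by_contra hx
  let S : Finset F := Finset.univ.filter (fun a => orbitRel gs (i x) (i a))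
  have hS : ∀ a, a ∈ S ↔ orbitRel gs (i x) (i a) := by intro a; simp [S]
  have e0 : Even S.card := evenCard S (H.theta 0)
    (fun a ha => (hS _).2 (orbitRel_trans ((hS a).1 ha) (h0 a))) (h 0).1 (h 0).2
  have e1 : Even (S.erase x).card := by
    refine evenCard _ (H.theta 1) (fun a ha => ?_) (h 1).1 (h 1).2
    rw [Finset.mem_erase, hS] at ha ⊢
    have h' : a ≠ H.theta 1 x := by rintro rfl; exact hx ha.2
    refine ⟨fun h'' => h' ?_, orbitRel_trans ha.2 (h1 a ha.1 h')⟩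
    rw [← h'', (h 1).1 a]
  have := Finset.card_erase_add_one ((hS x).2 (orbitRel_refl _))
  rw [← this] at e0
  exact (Nat.even_add_one.1 e0) e1

theorem bar_v (h₁ : H₁.IsHypermap) (h₂ : H₂.IsHypermap) [Fintype F₁] [Fintype F₂] :
    (bar H₁ H₂ x y).v = H₁.v + H₂.v := by
  unfold v
  set fs : Set ((F₁ ⊕ F₂) ⊕ Fin 4 → (F₁ ⊕ F₂) ⊕ Fin 4) :=
    {(bar H₁ H₂ x y).theta 1, (bar H₁ H₂ x y).theta 2} with hfs
  set f1 : Set (F₁ → F₁) := {H₁.theta 1, H₁.theta 2} with hf1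
  set f2 : Set (F₂ → F₂) := {H₂.theta 1, H₂.theta 2} with hf2
  have m1 : (bar H₁ H₂ x y).theta 1 ∈ fs := by simp [hfs]
  have m2 : (bar H₁ H₂ x y).theta 2 ∈ fs := by simp [hfs]
  have a1 : H₁.theta 1 ∈ f1 := by simp [hf1]
  have a2 : H₁.theta 2 ∈ f1 := by simp [hf1]
  have b1 : H₂.theta 1 ∈ f2 := by simp [hf2]
  have b2 : H₂.theta 2 ∈ f2 := by simp [hf2]
  let g : (F₁ ⊕ F₂) ⊕ Fin 4 → Quotient (orbitSetoid f1) ⊕ Quotient (orbitSetoid f2) :=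
    Sum.elim (Sum.elim (fun a => .inl (cls f1 a)) (fun a => .inr (cls f2 a)))
      ![.inl (cls f1 x), .inl (cls f1 x), .inr (cls f2 y), .inr (cls f2 y)]
  let s : (F₁ ⊕ F₂) ⊕ Fin 4 → F₁ ⊕ F₂ := Sum.elim id ![.inl x, .inl x, .inr y, .inr y]
  have hs : ∀ z, orbitRel fs z (.inl (s z)) := by
    rintro (a | k)
    · exact orbitRel_refl _
    · fin_cases k
      · exact orbitRel_step m1 (bar1_k ..)
      · exact orbitRel_trans (orbitRel_step m2 (bar2_k ..)) (orbitRel_step m1 (bar1_k ..))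
      · exact orbitRel_step m1 (bar1_k ..)
      · exact orbitRel_trans (orbitRel_step m2 (bar2_k ..)) (orbitRel_step m1 (bar1_k ..))
  have hgs : ∀ z, g (.inl (s z)) = g z := by
    rintro (a | k)
    · rfl
    · fin_cases k <;> rfl
  have L1 : ∀ {a b}, orbitRel f1 a b → orbitRel fs (.inl (.inl a)) (.inl (.inl b)) := by
    intro a b hab
    refine orbitRel_map (gs := fs) (fun a => .inl (.inl a)) ?_ hab
    rintro f (rfl | rfl) a
    · exact lift1 H₁ H₂ x y h₁ m1 (corner_x H₁ H₂ x y m1 m2) a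
    · exact orbitRel_step m2 (bar2_l ..)
  have L2 : ∀ {a b}, orbitRel f2 a b → orbitRel fs (.inl (.inr a)) (.inl (.inr b)) := by
    intro a b hab
    refine orbitRel_map (gs := fs) (fun a => .inl (.inr a)) ?_ hab
    rintro f (rfl | rfl) a
    · exact lift2 H₁ H₂ x y h₂ m1 (corner_y H₁ H₂ x y m1 m2) a
    · exact orbitRel_step m2 (bar2_r ..)
  rw [orbitCount_eq fs g, Nat.card_sum]
  · rfl
  · rintro f (rfl | rfl)
    · apply inv1 H₁ H₂ x y <;> simp [g, cls_step a1, cls_step b1]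
    · rintro ((a | a) | k)
      · simp [bar2_l, g, cls_step a2]
      · simp [bar2_r, g, cls_step b2]
      · rw [bar2_k]; fin_cases k <;> rfl
  · rintro (q | q)
    · induction q using Quotient.inductionOn with | _ a => exact ⟨.inl (.inl a), rfl⟩
    · induction q using Quotient.inductionOn with | _ a => exact ⟨.inl (.inr a), rfl⟩
  · intro z w hzw
    refine orbitRel_trans (hs z) (orbitRel_trans ?_ (orbitRel_symm (hs w)))
    rw [← hgs z, ← hgs w] at hzw
    generalize s z = z' at hzw ⊢
    generalize s w = w' at hzw ⊢
    rcases z' with a | a <;> rcases w' with b | b <;> simp [g] at hzw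
    · exact L1 (cls_eq.1 hzw)
    · exact L2 (cls_eq.1 hzw)

theorem bar_e [Fintype F₁] [Fintype F₂] :
    (bar H₁ H₂ x y).e = H₁.e + H₂.e + 1 := by
  unfold e
  set fs : Set ((F₁ ⊕ F₂) ⊕ Fin 4 → (F₁ ⊕ F₂) ⊕ Fin 4) :=
    {(bar H₁ H₂ x y).theta 0, (bar H₁ H₂ x y).theta 2} with hfs
  set f1 : Set (F₁ → F₁) := {H₁.theta 0, H₁.theta 2} with hf1
  set f2 : Set (F₂ → F₂) := {H₂.theta 0, H₂.theta 2} with hf2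
  have m0 : (bar H₁ H₂ x y).theta 0 ∈ fs := by simp [hfs]
  have m2 : (bar H₁ H₂ x y).theta 2 ∈ fs := by simp [hfs]
  have a0 : H₁.theta 0 ∈ f1 := by simp [hf1]
  have a2 : H₁.theta 2 ∈ f1 := by simp [hf1]
  have b0 : H₂.theta 0 ∈ f2 := by simp [hf2]
  have b2 : H₂.theta 2 ∈ f2 := by simp [hf2]
  let g : (F₁ ⊕ F₂) ⊕ Fin 4 →
      (Quotient (orbitSetoid f1) ⊕ Quotient (orbitSetoid f2)) ⊕ Unit :=
    Sum.map (Sum.map (cls f1) (cls f2)) (fun _ => ())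
  have L1 : ∀ {a b}, orbitRel f1 a b → orbitRel fs (.inl (.inl a)) (.inl (.inl b)) := by
    intro a b hab
    refine orbitRel_map (gs := fs) (fun a => .inl (.inl a)) ?_ hab
    rintro f (rfl | rfl) a
    · exact orbitRel_step m0 (bar0_l ..)
    · exact orbitRel_step m2 (bar2_l ..)
  have L2 : ∀ {a b}, orbitRel f2 a b → orbitRel fs (.inl (.inr a)) (.inl (.inr b)) := by
    intro a b hab
    refine orbitRel_map (gs := fs) (fun a => .inl (.inr a)) ?_ hab
    rintro f (rfl | rfl) a
    · exact orbitRel_step m0 (bar0_r ..)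
    · exact orbitRel_step m2 (bar2_r ..)
  have hk : ∀ k, orbitRel fs (.inr k) (.inr 0) := by
    intro k
    fin_cases k
    · exact orbitRel_refl _
    · exact orbitRel_step m2 (bar2_k ..)
    · exact orbitRel_step m0 (bar0_k ..)
    · exact orbitRel_trans (orbitRel_step m2 (bar2_k ..)) (orbitRel_step m0 (bar0_k ..))
  rw [orbitCount_eq fs g, Nat.card_sum, Nat.card_sum, Nat.card_unique (α := Unit)]
  · rfl
  · rintro f (rfl | rfl)
    · rintro ((a | a) | k)
      · simp [bar0_l, g, cls_step a0]
      · simp [bar0_r, g, cls_step b0]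
      · rw [bar0_k]; rfl
    · rintro ((a | a) | k)
      · simp [bar2_l, g, cls_step a2]
      · simp [bar2_r, g, cls_step b2]
      · rw [bar2_k]; rfl
  · rintro ((q | q) | q)
    · induction q using Quotient.inductionOn with | _ a => exact ⟨.inl (.inl a), rfl⟩
    · induction q using Quotient.inductionOn with | _ a => exact ⟨.inl (.inr a), rfl⟩
    · exact ⟨.inr 0, rfl⟩
  · rintro ((a | a) | a) ((b | b) | b) hzw <;> simp [g] at hzw
    · exact L1 (cls_eq.1 hzw)
    · exact L2 (cls_eq.1 hzw)
    · exact orbitRel_trans (hk a) (orbitRel_symm (hk b))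

theorem bar_f (h₁ : H₁.IsHypermap) (h₂ : H₂.IsHypermap) [Fintype F₁] [Fintype F₂] :
    (bar H₁ H₂ x y).f + 1 = H₁.f + H₂.f := by
  unfold f
  set fs : Set ((F₁ ⊕ F₂) ⊕ Fin 4 → (F₁ ⊕ F₂) ⊕ Fin 4) :=
    {(bar H₁ H₂ x y).theta 0, (bar H₁ H₂ x y).theta 1} with hfs
  set f1 : Set (F₁ → F₁) := {H₁.theta 0, H₁.theta 1} with hf1
  set f2 : Set (F₂ → F₂) := {H₂.theta 0, H₂.theta 1} with hf2
  have m0 : (bar H₁ H₂ x y).theta 0 ∈ fs := by simp [hfs]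
  have m1 : (bar H₁ H₂ x y).theta 1 ∈ fs := by simp [hfs]
  have a0 : H₁.theta 0 ∈ f1 := by simp [hf1]
  have a1 : H₁.theta 1 ∈ f1 := by simp [hf1]
  have b0 : H₂.theta 0 ∈ f2 := by simp [hf2]
  have b1 : H₂.theta 1 ∈ f2 := by simp [hf2]
  let g : (F₁ ⊕ F₂) ⊕ Fin 4 →
      Quotient (orbitSetoid f1) ⊕ {q : Quotient (orbitSetoid f2) // q ≠ cls f2 y} :=
    Sum.elim (Sum.elim (fun a => .inl (cls f1 a))
      (fun a => if h : cls f2 a = cls f2 y then .inl (cls f1 x) else .inr ⟨cls f2 a, h⟩))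
      (fun _ => .inl (cls f1 x))
  have cx : orbitRel fs (.inl (.inl x)) (.inl (.inl (H₁.theta 1 x))) :=
    parity H₁ h₁ x fs (fun a => .inl (.inl a)) (fun a => orbitRel_step m0 (bar0_l ..))
      (fun a h h' => orbitRel_step m1 (bar1_l _ _ _ _ _ h h'))
  have cy : orbitRel fs (.inl (.inr y)) (.inl (.inr (H₂.theta 1 y))) :=
    parity H₂ h₂ y fs (fun a => .inl (.inr a)) (fun a => orbitRel_step m0 (bar0_r ..))
      (fun a h h' => orbitRel_step m1 (bar1_r _ _ _ _ _ h h'))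
  have L1 : ∀ {a b}, orbitRel f1 a b → orbitRel fs (.inl (.inl a)) (.inl (.inl b)) := by
    intro a b hab
    refine orbitRel_map (gs := fs) (fun a => .inl (.inl a)) ?_ hab
    rintro f (rfl | rfl) a
    · exact orbitRel_step m0 (bar0_l ..)
    · exact lift1 H₁ H₂ x y h₁ m1 cx a
  have L2 : ∀ {a b}, orbitRel f2 a b → orbitRel fs (.inl (.inr a)) (.inl (.inr b)) := by
    intro a b hab
    refine orbitRel_map (gs := fs) (fun a => .inl (.inr a)) ?_ hab
    rintro f (rfl | rfl) a
    · exact orbitRel_step m0 (bar0_r ..)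
    · exact lift2 H₁ H₂ x y h₂ m1 cy a
  have k0 : orbitRel fs (.inr 0) (.inl (.inl x)) := orbitRel_step m1 (bar1_k ..)
  have k2 : orbitRel fs (.inr 2) (.inl (.inl x)) :=
    orbitRel_trans (orbitRel_step m0 (bar0_k ..)) k0
  have k1 : orbitRel fs (.inr 1) (.inl (.inl x)) :=
    orbitRel_trans (orbitRel_step m1 (bar1_k ..)) (orbitRel_symm cx)
  have k3 : orbitRel fs (.inr 3) (.inl (.inl x)) :=
    orbitRel_trans (orbitRel_step m0 (bar0_k ..)) k1
  have ky : orbitRel fs (.inl (.inr y)) (.inl (.inl x)) :=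
    orbitRel_trans (orbitRel_step m1 (bar1_y ..)) k2
  have hz : ∀ z, (∃ a, g z = .inl (cls f1 a) ∧ orbitRel fs z (.inl (.inl a))) ∨
      (∃ a h, g z = .inr ⟨cls f2 a, h⟩ ∧ orbitRel fs z (.inl (.inr a))) := by
    rintro ((a | a) | k)
    · exact .inl ⟨a, rfl, orbitRel_refl _⟩
    · by_cases h : cls f2 a = cls f2 y
      · exact .inl ⟨x, by simp [g, h], orbitRel_trans (L2 (cls_eq.1 h)) ky⟩
      · exact .inr ⟨a, h, by simp [g, h], orbitRel_refl _⟩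
    · refine .inl ⟨x, rfl, ?_⟩
      fin_cases k
      exacts [k0, k1, k2, k3]
  rw [orbitCount_eq fs g, Nat.card_sum]
  · have : Nat.card {q : Quotient (orbitSetoid f2) // q ≠ cls f2 y} + 1 = orbitCount f2 := by
      unfold orbitCount
      rw [← Finite.card_option]
      exact Nat.card_congr (Equiv.optionSubtypeNe (cls f2 y))
    rw [add_assoc, this]
    rfl
  · rintro f (rfl | rfl)
    · rintro ((a | a) | k)
      · simp [bar0_l, g, cls_step a0]
      · simp [bar0_r, g, cls_step b0]
      · rw [bar0_k]; rfl
    · apply inv1 H₁ H₂ x y <;> simp [g, cls_step a1, cls_step b1]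
  · rintro (q | ⟨q, hq⟩)
    · induction q using Quotient.inductionOn with | _ a => exact ⟨.inl (.inl a), rfl⟩
    · induction q using Quotient.inductionOn with
      | _ a => exact ⟨.inl (.inr a), by simp only [g, Sum.elim_inl, Sum.elim_inr]; exact dif_neg hq⟩
  · intro z w hzw
    rcases hz z with ⟨a, ha, hza⟩ | ⟨a, ha', ha, hza⟩ <;>
    rcases hz w with ⟨b, hb, hwb⟩ | ⟨b, hb', hb, hwb⟩ <;>
    rw [ha, hb] at hzw <;> simp at hzw
    · exact orbitRel_trans hza (orbitRel_trans (L1 (cls_eq.1 hzw)) (orbitRel_symm hwb))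
    · exact orbitRel_trans hza (orbitRel_trans (L2 (cls_eq.1 hzw)) (orbitRel_symm hwb))

theorem bar_c (h₁ : H₁.IsHypermap) (h₂ : H₂.IsHypermap)
    (hc₁ : H₁.Connected) (hc₂ : H₂.Connected) : (bar H₁ H₂ x y).Connected := by
  have conn : ∀ {F : Type} (H : PreHypermap F), H.Connected →
      ∀ a b, orbitRel {H.theta 0, H.theta 1, H.theta 2} a b := by
    intro F H h a b
    have := (Nat.card_eq_one_iff_unique.1 h).1
    exact cls_eq.1 (Subsingleton.elim _ _)
  unfold Connected c
  set fs : Set ((F₁ ⊕ F₂) ⊕ Fin 4 → (F₁ ⊕ F₂) ⊕ Fin 4) :=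
    {(bar H₁ H₂ x y).theta 0, (bar H₁ H₂ x y).theta 1, (bar H₁ H₂ x y).theta 2} with hfs
  have m0 : (bar H₁ H₂ x y).theta 0 ∈ fs := by simp [hfs]
  have m1 : (bar H₁ H₂ x y).theta 1 ∈ fs := by simp [hfs]
  have m2 : (bar H₁ H₂ x y).theta 2 ∈ fs := by simp [hfs]
  have cx := corner_x H₁ H₂ x y m1 m2
  have cy := corner_y H₁ H₂ x y m1 m2
  have L1 : ∀ a b, orbitRel fs (.inl (.inl a)) (.inl (.inl b)) := by
    intro a b
    refine orbitRel_map (gs := fs) (fun a => .inl (.inl a)) ?_ (conn H₁ hc₁ a b)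
    rintro f (rfl | rfl | rfl) a
    · exact orbitRel_step m0 (bar0_l ..)
    · exact lift1 H₁ H₂ x y h₁ m1 cx a
    · exact orbitRel_step m2 (bar2_l ..)
  have L2 : ∀ a b, orbitRel fs (.inl (.inr a)) (.inl (.inr b)) := by
    intro a b
    refine orbitRel_map (gs := fs) (fun a => .inl (.inr a)) ?_ (conn H₂ hc₂ a b)
    rintro f (rfl | rfl | rfl) a
    · exact orbitRel_step m0 (bar0_r ..)
    · exact lift2 H₁ H₂ x y h₂ m1 cy a
    · exact orbitRel_step m2 (bar2_r ..)
  have k0 : orbitRel fs (.inr 0) (.inl (.inl x)) := orbitRel_step m1 (bar1_k ..)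
  have k2 : orbitRel fs (.inr 2) (.inl (.inl x)) :=
    orbitRel_trans (orbitRel_step m0 (bar0_k ..)) k0
  have k1 : orbitRel fs (.inr 1) (.inl (.inl x)) :=
    orbitRel_trans (orbitRel_step m1 (bar1_k ..)) (orbitRel_symm cx)
  have k3 : orbitRel fs (.inr 3) (.inl (.inl x)) :=
    orbitRel_trans (orbitRel_step m0 (bar0_k ..)) k1
  have ky : orbitRel fs (.inl (.inr y)) (.inl (.inl x)) :=
    orbitRel_trans (orbitRel_step m1 (bar1_y ..)) k2
  have all : ∀ z, orbitRel fs z (.inl (.inl x)) := by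
    rintro ((a | a) | k)
    · exact L1 _ _
    · exact orbitRel_trans (L2 _ _) ky
    · fin_cases k
      exacts [k0, k1, k2, k3]
  rw [orbitCount_eq fs (fun _ => ()), Nat.card_unique (α := Unit)]
  · intros; rfl
  · exact fun _ => ⟨.inr 0, rfl⟩
  · intro a b _; exact orbitRel_trans (all a) (orbitRel_symm (all b))

end

end PreHypermap

open PreHypermap in
/-- A bar-amalgamation of two connected hypermaps (the connecting hyperedge meeting one
corner of each) is connected, with `v = v₁ + v₂`, `e = e₁ + e₂ + 1`, `f = f₁ + f₂ - 1`,
`χ = χ₁ + χ₂ - 2` and `ε = ε₁ + ε₂`. -/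
theorem statement_13 {F₁ F₂ : Type} [Fintype F₁] [Fintype F₂]
    (H₁ : PreHypermap F₁) (H₂ : PreHypermap F₂)
    (h₁ : H₁.IsHypermap) (h₂ : H₂.IsHypermap)
    (hc₁ : H₁.Connected) (hc₂ : H₂.Connected) (x : F₁) (y : F₂) :
    (bar H₁ H₂ x y).Connected ∧
    (bar H₁ H₂ x y).v = H₁.v + H₂.v ∧
    (bar H₁ H₂ x y).e = H₁.e + H₂.e + 1 ∧
    ((bar H₁ H₂ x y).f : ℤ) = (H₁.f : ℤ) + (H₂.f : ℤ) - 1 ∧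
    (bar H₁ H₂ x y).chi = H₁.chi + H₂.chi - 2 ∧
    (bar H₁ H₂ x y).eulerGenus = H₁.eulerGenus + H₂.eulerGenus := by

  have hC := bar_c H₁ H₂ x y h₁ h₂ hc₁ hc₂
  have hv := bar_v H₁ H₂ x y h₁ h₂
  have he := bar_e H₁ H₂ x y
  have hf := bar_f H₁ H₂ x y h₁ h₂
  have hf' : ((bar H₁ H₂ x y).f : ℤ) = (H₁.f : ℤ) + (H₂.f : ℤ) - 1 := by omega
  have hchi : (bar H₁ H₂ x y).chi = H₁.chi + H₂.chi - 2 := by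
    obtain ⟨m, hm⟩ := evenCard (Finset.univ : Finset F₁) (H₁.theta 0) (by simp) (h₁ 0).1 (h₁ 0).2
    obtain ⟨n, hn⟩ := evenCard (Finset.univ : Finset F₂) (H₂.theta 0) (by simp) (h₂ 0).1 (h₂ 0).2
    rw [Finset.card_univ, ← Nat.card_eq_fintype_card] at hm hn
    unfold chi
    rw [hv, he, hf', Nat.card_sum, Nat.card_sum, hm, hn, Nat.card_fin]
    push_cast
    omega
  refine ⟨hC, hv, he, hf', hchi, ?_⟩
  unfold Connected at hC hc₁ hc₂
  unfold eulerGenus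
  rw [hchi, hC, hc₁, hc₂]
  push_cast
  ring
end

section
/- Let H = (F, θ₀, θ₁, θ₂) be a connected combinatorial hypermap whose underlying hypergraph is a hypertree without cycles, i.e. |F| = 2·(v(H) + e(H) − 1). Then every partial dual of H has Euler genus zero: ε(H^A) = 0 for all A ⊆ E(H). Equivalently, the partial-dual Euler-genus polynomial of H is the constant 2^{e(H)}. -/
open Classical

namespace PreHypermap

variable {F : Type}

lemma orbitSetoid_le {fs : Set (F → F)} {s : Setoid F}
    (h : ∀ g ∈ fs, ∀ x, s x (g x)) : orbitSetoid fs ≤ s := by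
  intro x y hxy
  replace hxy : Relation.EqvGen (fun x y => ∃ f ∈ fs, f x = y) x y := hxy
  induction hxy with
  | rel x y h' => obtain ⟨g, hg, rfl⟩ := h'; exact h g hg x
  | refl x => exact Setoid.refl' s x
  | symm x y _ ih => exact Setoid.symm' s ih
  | trans x y z _ _ ih1 ih2 => exact Setoid.trans' s ih1 ih2

lemma orbit_step {fs : Set (F → F)} {g : F → F} (hg : g ∈ fs) (x : F) :
    orbitSetoid fs x (g x) := Relation.EqvGen.rel _ _ ⟨g, hg, rfl⟩

/-- incidence graph -/
def incG (H : PreHypermap F) : SimpleGraph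
    (Quotient (orbitSetoid {H.theta 1, H.theta 2}) ⊕
     Quotient (orbitSetoid {H.theta 0, H.theta 2})) where
  Adj a b := ∃ x : F, (a = Sum.inl ⟦x⟧ ∧ b = Sum.inr ⟦x⟧) ∨ (a = Sum.inr ⟦x⟧ ∧ b = Sum.inl ⟦x⟧)
  symm := ⟨by
    rintro a b ⟨x, h | h⟩
    · exact ⟨x, Or.inr ⟨h.2, h.1⟩⟩
    · exact ⟨x, Or.inl ⟨h.2, h.1⟩⟩⟩
  loopless := ⟨by
    rintro a ⟨x, ⟨h, h'⟩ | ⟨h, h'⟩⟩ <;> simp [h] at h'⟩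

lemma incG_adj (H : PreHypermap F) (x : F) :
    H.incG.Adj (Sum.inl ⟦x⟧) (Sum.inr ⟦x⟧) := ⟨x, Or.inl ⟨rfl, rfl⟩⟩

lemma conn_top {H : PreHypermap F} (hconn : H.Connected) (x y : F) :
    orbitSetoid {H.theta 0, H.theta 1, H.theta 2} x y := by
  have h : Nat.card (Quotient (orbitSetoid {H.theta 0, H.theta 1, H.theta 2})) = 1 := hconn
  have := (Nat.card_eq_one_iff_unique.1 h).1
  exact Quotient.exact (Subsingleton.elim (⟦x⟧ : Quotient (orbitSetoid {H.theta 0, H.theta 1, H.theta 2})) ⟦y⟧)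

lemma conn_nonempty {H : PreHypermap F} (hconn : H.Connected) : Nonempty F := by
  have h : Nat.card (Quotient (orbitSetoid {H.theta 0, H.theta 1, H.theta 2})) = 1 := hconn
  obtain ⟨q⟩ := (Nat.card_eq_one_iff_unique.1 h).2
  exact ⟨q.out⟩

lemma vq_eq (H : PreHypermap F) {i : Fin 3} (hi : i = 1 ∨ i = 2) (x : F) :
    (⟦H.theta i x⟧ : Quotient (orbitSetoid {H.theta 1, H.theta 2})) = ⟦x⟧ :=
  Quotient.sound (Setoid.symm' _ (orbit_step (by rcases hi with rfl | rfl <;> simp) x))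

lemma eq_eq (H : PreHypermap F) {i : Fin 3} (hi : i = 0 ∨ i = 2) (x : F) :
    (⟦H.theta i x⟧ : Quotient (orbitSetoid {H.theta 0, H.theta 2})) = ⟦x⟧ :=
  Quotient.sound (Setoid.symm' _ (orbit_step (by rcases hi with rfl | rfl <;> simp) x))

lemma incG_conn {H : PreHypermap F} (hconn : H.Connected) : H.incG.Connected := by
  obtain ⟨x0⟩ := conn_nonempty hconn
  let s : Setoid F := ⟨fun x y => H.incG.Reachable (Sum.inl ⟦x⟧) (Sum.inl ⟦y⟧),
    ⟨fun x => .rfl, fun h => h.symm, fun h h' => h.trans h'⟩⟩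
  have hs : orbitSetoid {H.theta 0, H.theta 1, H.theta 2} ≤ s := by
    apply orbitSetoid_le
    rintro g (rfl | rfl | rfl) x
    · change H.incG.Reachable _ _
      have h1 := (H.incG_adj x).reachable
      have h2 := (H.incG_adj (H.theta 0 x)).reachable
      rw [eq_eq H (Or.inl rfl)] at h2
      exact h1.trans h2.symm
    · change H.incG.Reachable _ _
      rw [vq_eq H (Or.inl rfl)]
    · change H.incG.Reachable _ _
      rw [vq_eq H (Or.inr rfl)]
  have key : ∀ a, H.incG.Reachable (Sum.inl ⟦x0⟧) a := by
    rintro (a | a)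
    · induction a using Quotient.inductionOn with
      | h y => exact hs (conn_top hconn x0 y)
    · induction a using Quotient.inductionOn with
      | h y => exact (show H.incG.Reachable _ _ from hs (conn_top hconn x0 y)).trans (H.incG_adj y).reachable
  have : Nonempty (Quotient (orbitSetoid {H.theta 1, H.theta 2}) ⊕
     Quotient (orbitSetoid {H.theta 0, H.theta 2})) := ⟨Sum.inl ⟦x0⟧⟩
  exact ⟨fun a b => (key a).symm.trans (key b)⟩

lemma tree_aux [Fintype F] {H : PreHypermap F} (hH : H.IsHypermap) (hconn : H.Connected)
    (htree : (Nat.card F : ℤ) = 2 * ((H.v : ℤ) + (H.e : ℤ) - 1)) :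
    H.incG.IsAcyclic ∧ ∀ x y : F, orbitSetoid {H.theta 1, H.theta 2} x y →
      orbitSetoid {H.theta 0, H.theta 2} x y → y = x ∨ y = H.theta 2 x := by
  let V := Quotient (orbitSetoid {H.theta 1, H.theta 2})
  let E := Quotient (orbitSetoid {H.theta 0, H.theta 2})
  have hc := incG_conn hconn
  have h1 := hc.card_vert_le_card_edgeSet_add_one
  have hV : Nat.card (V ⊕ E) = H.v + H.e := Nat.card_sum
  let φ : F → H.incG.edgeSet := fun x => ⟨s(Sum.inl ⟦x⟧, Sum.inr ⟦x⟧), H.incG_adj x⟩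
  have hφ2 : ∀ x, φ (H.theta 2 x) = φ x := by
    intro x
    apply Subtype.ext
    change s(Sum.inl ⟦H.theta 2 x⟧, Sum.inr ⟦H.theta 2 x⟧) = s(Sum.inl ⟦x⟧, Sum.inr ⟦x⟧)
    rw [vq_eq H (Or.inr rfl), eq_eq H (Or.inr rfl)]
  have hsurj : ∀ b, ∃ x, φ x = b := by
    rintro ⟨b, hb⟩
    induction b using Sym2.ind with
    | _ a b =>
      have hb' : H.incG.Adj a b := hb
      obtain ⟨x, ⟨h1, h2⟩ | ⟨h1, h2⟩⟩ := hb'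
      · exact ⟨x, Subtype.ext (by change s(Sum.inl ⟦x⟧, Sum.inr ⟦x⟧) = s(a, b); rw [h1, h2])⟩
      · exact ⟨x, Subtype.ext (by change s(Sum.inl ⟦x⟧, Sum.inr ⟦x⟧) = s(a, b); rw [h1, h2]; exact Sym2.eq_swap)⟩
  have hge : ∀ b, 2 ≤ (Finset.univ.filter (fun x => φ x = b)).card := by
    intro b
    obtain ⟨x, rfl⟩ := hsurj b
    have : ({x, H.theta 2 x} : Finset F) ⊆ Finset.univ.filter (fun z => φ z = φ x) := by
      intro z hz
      simp only [Finset.mem_insert, Finset.mem_singleton] at hz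
      rcases hz with rfl | rfl <;> simp [hφ2]
    have h2 := Finset.card_le_card this
    rwa [Finset.card_pair ((hH 2).2 x).symm] at h2
  have hsum : Fintype.card F = ∑ b : H.incG.edgeSet, (Finset.univ.filter (fun x => φ x = b)).card :=
    Finset.card_eq_sum_card_fiberwise (fun x _ => Finset.mem_univ _)
  have hFc : (Nat.card F : ℤ) = Fintype.card F := by simp
  have hb : Nat.card H.incG.edgeSet * 2 ≤ Fintype.card F := by
    rw [hsum, Nat.card_eq_fintype_card]
    have := Finset.sum_le_sum (fun b (_ : b ∈ (Finset.univ : Finset H.incG.edgeSet)) => hge b)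
    simpa using this
  refine ⟨?_, ?_⟩
  · have : H.incG.IsTree := by
      rw [SimpleGraph.isTree_iff_connected_and_card]
      refine ⟨hc, ?_⟩
      change _ = Nat.card (V ⊕ E)
      change Nat.card (V ⊕ E) ≤ _ at h1
      omega
    exact this.2
  · intro x y hv he
    by_contra hcon
    push Not at hcon
    have hxy : φ y = φ x := by
      apply Subtype.ext
      change s(Sum.inl ⟦y⟧, Sum.inr ⟦y⟧) = s(Sum.inl ⟦x⟧, Sum.inr ⟦x⟧)
      rw [Quotient.sound hv, Quotient.sound he]
    have h4 : 4 ≤ (Finset.univ.filter (fun z => φ z = φ x)).card := by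
      have : ({x, H.theta 2 x, y, H.theta 2 y} : Finset F) ⊆ Finset.univ.filter (fun z => φ z = φ x) := by
        intro z hz
        simp only [Finset.mem_insert, Finset.mem_singleton] at hz
        rcases hz with rfl | rfl | rfl | rfl <;> simp [hφ2, hxy]
      have h2 := Finset.card_le_card this
      have i2 := (hH 2).1
      have : ({x, H.theta 2 x, y, H.theta 2 y} : Finset F).card = 4 := by
        have a1 : x ≠ H.theta 2 x := ((hH 2).2 x).symm
        have a2 : y ≠ H.theta 2 y := ((hH 2).2 y).symm
        have a3 : x ≠ H.theta 2 y := fun h => hcon.2 (by rw [h, i2])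
        have a4 : H.theta 2 x ≠ H.theta 2 y := fun h => hcon.1 (i2.injective h).symm
        have a5 := hcon.1.symm
        have a6 := hcon.2.symm
        rw [Finset.card_insert_of_notMem, Finset.card_insert_of_notMem, Finset.card_pair] <;> simp [*]
      omega
    have : Nat.card H.incG.edgeSet * 2 + 2 ≤ Fintype.card F := by
      rw [hsum, Nat.card_eq_fintype_card]
      have := Finset.sum_le_sum (f := fun b => 2 + if b = φ x then 2 else 0) (fun b (_ : b ∈ (Finset.univ : Finset H.incG.edgeSet)) => show _ ≤ (Finset.univ.filter (fun x => φ x = b)).card from by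
        split_ifs with h
        · rw [h]; exact h4
        · exact hge b)
      simpa [Finset.sum_add_distrib] using this
    change Nat.card (V ⊕ E) ≤ _ at h1
    omega

lemma tree_prop [Fintype F] {H : PreHypermap F} (hH : H.IsHypermap) (hconn : H.Connected)
    (htree : (Nat.card F : ℤ) = 2 * ((H.v : ℤ) + (H.e : ℤ) - 1)) (x y : F)
    (hxy : orbitSetoid {H.theta 0, H.theta 2} x y)
    (h : orbitSetoid {H.theta 1, H.theta 2, fun z => if orbitSetoid {H.theta 0, H.theta 2} x z then z else H.theta 0 z} x y) :
    y = x ∨ y = H.theta 2 x := by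
  obtain ⟨hac, hinj⟩ := tree_aux hH hconn htree
  by_cases hv : orbitSetoid {H.theta 1, H.theta 2} x y
  · exact hinj x y hv hxy
  exfalso
  have hbr := (SimpleGraph.isAcyclic_iff_forall_adj_isBridge.1 hac) (H.incG_adj x)
  rw [SimpleGraph.isBridge_iff] at hbr
  refine hbr ?_
  set G' := H.incG.deleteEdges {s(Sum.inl ⟦x⟧, Sum.inr ⟦x⟧)} with hG'
  let s : Setoid F := ⟨fun x y => G'.Reachable (Sum.inl ⟦x⟧) (Sum.inl ⟦y⟧),
    ⟨fun x => .rfl, fun h => h.symm, fun h h' => h.trans h'⟩⟩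
  have hadj : ∀ z, ¬ orbitSetoid {H.theta 0, H.theta 2} x z ∨ ¬ orbitSetoid {H.theta 1, H.theta 2} x z →
      G'.Adj (Sum.inl ⟦z⟧) (Sum.inr ⟦z⟧) := by
    intro z hz
    rw [hG', SimpleGraph.deleteEdges_adj]
    refine ⟨H.incG_adj z, ?_⟩
    simp only [Set.mem_singleton_iff, Sym2.eq_iff]
    rintro (⟨h1, h2⟩ | ⟨h1, h2⟩)
    · have h1 := Setoid.symm' _ (Quotient.exact (Sum.inl.inj h1))
      have h2 := Setoid.symm' _ (Quotient.exact (Sum.inr.inj h2))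
      rcases hz with hz | hz
      · exact hz h2
      · exact hz h1
    · simp at h1
  have hs : orbitSetoid {H.theta 1, H.theta 2, fun z => if orbitSetoid {H.theta 0, H.theta 2} x z then z else H.theta 0 z} ≤ s := by
    apply orbitSetoid_le
    rintro g (rfl | rfl | rfl) z
    · change G'.Reachable _ _
      rw [vq_eq H (Or.inl rfl)]
    · change G'.Reachable _ _
      rw [vq_eq H (Or.inr rfl)]
    · change G'.Reachable _ _
      dsimp only
      split_ifs with hz
      · exact .rfl
      · have h1 := (hadj z (Or.inl hz)).reachable
        have h2 := (hadj (H.theta 0 z) (Or.inl fun h => hz (Setoid.trans' _ h (Setoid.symm' _ (orbit_step (by simp) z))))).reachable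
        rw [eq_eq H (Or.inl rfl)] at h2
        exact h1.trans h2.symm
  have h1 : G'.Reachable (Sum.inl ⟦x⟧) (Sum.inl ⟦y⟧) := hs h
  have h2 := (hadj y (Or.inr hv)).reachable
  have h3 := h1.trans h2
  rwa [← Quotient.sound hxy] at h3

end PreHypermap
namespace PreHypermap

variable {F : Type}

lemma tree_prop' [Fintype F] {H : PreHypermap F} (hH : H.IsHypermap) (hconn : H.Connected)
    (htree : (Nat.card F : ℤ) = 2 * ((H.v : ℤ) + (H.e : ℤ) - 1)) (x0 x y : F)
    (hx : orbitSetoid {H.theta 0, H.theta 2} x0 x)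
    (hy : orbitSetoid {H.theta 0, H.theta 2} x0 y)
    (h : orbitSetoid {H.theta 1, H.theta 2, fun z => if orbitSetoid {H.theta 0, H.theta 2} x0 z then z else H.theta 0 z} x y) :
    y = x ∨ y = H.theta 2 x := by
  refine tree_prop hH hconn htree x y (Setoid.trans' _ (Setoid.symm' _ hx) hy) ?_
  have : ∀ z, orbitSetoid {H.theta 0, H.theta 2} x z ↔ orbitSetoid {H.theta 0, H.theta 2} x0 z := fun z =>
    ⟨fun h => Setoid.trans' _ hx h, fun h => Setoid.trans' _ (Setoid.symm' _ hx) h⟩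
  have hf : (fun z => if orbitSetoid {H.theta 0, H.theta 2} x z then z else H.theta 0 z) =
      (fun z => if orbitSetoid {H.theta 0, H.theta 2} x0 z then z else H.theta 0 z) := by
    funext z
    by_cases hz : orbitSetoid {H.theta 0, H.theta 2} x0 z
    · rw [if_pos hz, if_pos ((this z).2 hz)]
    · rw [if_neg hz, if_neg (fun h => hz ((this z).1 h))]
  rw [hf]
  exact h

lemma even_card_of_invol (s : Finset F) (g : F → F) (h1 : ∀ a ∈ s, g a ∈ s)
    (h2 : ∀ a ∈ s, g (g a) = a) (h3 : ∀ a ∈ s, g a ≠ a) : Even s.card := by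
  have h : ∑ a ∈ s, (1 : ZMod 2) = 0 :=
    Finset.sum_involution (fun a _ => g a) (fun a ha => by decide) (fun a ha _ => h3 a ha)
      (fun a ha => h1 a ha) (fun a ha => h2 a ha)
  rw [Finset.sum_const, nsmul_eq_mul, mul_one] at h
  exact (ZMod.natCast_eq_zero_iff_even).1 h

/-- the hyperedge of x0 -/
def hedge (H : PreHypermap F) (x0 : F) : Set F := {z | orbitSetoid {H.theta 0, H.theta 2} x0 z}

/-- `τ` cut to identity on `e` -/
noncomputable def off (e : Set F) (τ : F → F) : F → F := fun z => if z ∈ e then z else τ z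

/-- good involutions -/
def Good (H : PreHypermap F) (e : Set F) (τ : F → F) : Prop :=
  ∀ z ∉ e, τ z ∉ e ∧ τ (τ z) = z ∧ τ z ≠ z ∧ (τ z = H.theta 0 z ∨ τ z = H.theta 2 z)

lemma key2 [Fintype F] {H : PreHypermap F} (hH : H.IsHypermap) (hconn : H.Connected)
    (htree : (Nat.card F : ℤ) = 2 * ((H.v : ℤ) + (H.e : ℤ) - 1)) (x0 : F) (τ : F → F)
    (hτ : H.Good (H.hedge x0) τ) (x y : F) (hx : x ∈ H.hedge x0) (hy : y ∈ H.hedge x0) :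
    orbitSetoid {H.theta 1, off (H.hedge x0) τ} x y ↔ y = x ∨ y = H.theta 2 x := by
  set r := orbitSetoid {H.theta 1, off (H.hedge x0) τ} with hr
  have hle : r ≤ orbitSetoid {H.theta 1, H.theta 2, fun z => if orbitSetoid {H.theta 0, H.theta 2} x0 z then z else H.theta 0 z} := by
    apply orbitSetoid_le
    rintro g (rfl | rfl) z
    · exact orbit_step (by simp) z
    · unfold off
      by_cases hz : z ∈ H.hedge x0
      · rw [if_pos hz]
      · rw [if_neg hz]
        rcases (hτ z hz).2.2.2 with h | h
        · rw [h]
          have := orbit_step (fs := {H.theta 1, H.theta 2, fun z => if orbitSetoid {H.theta 0, H.theta 2} x0 z then z else H.theta 0 z}) (g := fun z => if orbitSetoid {H.theta 0, H.theta 2} x0 z then z else H.theta 0 z) (by simp) z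
          have hz' : (if orbitSetoid {H.theta 0, H.theta 2} x0 z then z else H.theta 0 z) = H.theta 0 z := if_neg hz
          rwa [hz'] at this
        · rw [h]; exact orbit_step (by simp) z
  have hfw : ∀ y ∈ H.hedge x0, r x y → y = x ∨ y = H.theta 2 x := fun y hy h =>
    tree_prop' hH hconn htree x0 x y hx hy (hle h)
  refine ⟨hfw y hy, ?_⟩
  rintro (rfl | rfl)
  · exact Setoid.refl' _ _
  by_contra hcon
  have e1 : Even (Finset.univ.filter (fun z => r x z)).card := by
    apply even_card_of_invol _ (H.theta 1)
    · intro a ha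
      simp only [Finset.mem_filter, Finset.mem_univ, true_and] at ha ⊢
      exact Setoid.trans' _ ha (orbit_step (by simp) a)
    · intro a _; exact (hH 1).1 a
    · intro a _; exact (hH 1).2 a
  have e2 : Even ((Finset.univ.filter (fun z => r x z)).filter (fun z => ¬ z ∈ H.hedge x0)).card := by
    apply even_card_of_invol _ τ
    · intro a ha
      simp only [Finset.mem_filter, Finset.mem_univ, true_and] at ha ⊢
      refine ⟨Setoid.trans' _ ha.1 ?_, (hτ a ha.2).1⟩
      have := orbit_step (fs := {H.theta 1, off (H.hedge x0) τ}) (g := off (H.hedge x0) τ) (by simp) a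
      unfold off at this
      rw [if_neg ha.2] at this
      exact this
    · intro a ha
      simp only [Finset.mem_filter] at ha
      exact (hτ a ha.2).2.1
    · intro a ha
      simp only [Finset.mem_filter] at ha
      exact (hτ a ha.2).2.2.1
  have e3 : ((Finset.univ.filter (fun z => r x z)).filter (fun z => z ∈ H.hedge x0)) = {x} := by
    ext z
    simp only [Finset.mem_filter, Finset.mem_univ, true_and, Finset.mem_singleton]
    constructor
    · rintro ⟨h1, h2⟩
      rcases hfw z h2 h1 with h | h
      · exact h
      · exact absurd (h ▸ h1) hcon
    · rintro rfl
      exact ⟨Setoid.refl' _ _, hx⟩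
  have e4 := Finset.card_filter_add_card_filter_not (s := Finset.univ.filter (fun z => r x z)) (fun z => z ∈ H.hedge x0)
  rw [e3, Finset.card_singleton] at e4
  rw [← e4] at e1
  rw [Nat.even_add] at e1
  exact absurd (e1.2 e2) (by decide)

lemma collapse [Finite F] (r r' : Setoid F) (e : Set F) (x0 : F) (hx0 : x0 ∈ e) (hle : r ≤ r')
    (he : ∀ x ∈ e, r' x0 x) (hmin : ∀ s : Setoid F, r ≤ s → (∀ x ∈ e, s x0 x) → r' ≤ s) :
    Nat.card (Quotient r') + Nat.card (Quotient (r.comap (Subtype.val : e → F)))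
      = Nat.card (Quotient r) + 1 := by
  let M : F → Prop := fun x => ∃ z ∈ e, r z x
  let s : Setoid F := ⟨fun x y => r x y ∨ (M x ∧ M y), by
    have hM : ∀ x y, r x y → M x → M y := fun x y h ⟨z, hz, h'⟩ => ⟨z, hz, Setoid.trans' _ h' h⟩
    refine ⟨fun x => Or.inl (Setoid.refl' _ _), ?_, ?_⟩
    · rintro x y (h | h)
      · exact Or.inl (Setoid.symm' _ h)
      · exact Or.inr ⟨h.2, h.1⟩
    · rintro x y z (h | h) (h' | h')
      · exact Or.inl (Setoid.trans' _ h h')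
      · exact Or.inr ⟨hM y x (Setoid.symm' _ h) h'.1, h'.2⟩
      · exact Or.inr ⟨h.1, hM y z h' h.2⟩
      · exact Or.inr ⟨h.1, h'.2⟩⟩
  have hs : r' ≤ s := hmin s (fun x y h => Or.inl h)
    (fun x hx => Or.inr ⟨⟨x0, hx0, Setoid.refl' _ _⟩, ⟨x, hx, Setoid.refl' _ _⟩⟩)
  let P : Quotient r → Prop := fun q => ∃ z ∈ e, (Quotient.mk r z) = q
  have c1 : Nat.card (Quotient r) = Nat.card {q // P q} + Nat.card {q // ¬ P q} := by
    rw [← Nat.card_sum]; exact Nat.card_congr (Equiv.sumCompl P).symm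
  have c2 : Nat.card (Quotient (r.comap (Subtype.val : e → F))) = Nat.card {q // P q} := by
    refine Nat.card_congr (Equiv.ofBijective (Quotient.lift (fun z : e => (⟨Quotient.mk r z.1, z.1, z.2, rfl⟩ : {q // P q})) ?_) ⟨?_, ?_⟩)
    · intro a b hab
      exact Subtype.ext (Quotient.sound hab)
    · intro a b
      induction a using Quotient.inductionOn
      induction b using Quotient.inductionOn
      intro h
      exact Quotient.sound (show r _ _ from Quotient.exact (Subtype.ext_iff.1 h))
    · rintro ⟨q, z, hz, rfl⟩
      exact ⟨Quotient.mk _ ⟨z, hz⟩, rfl⟩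
  have c3 : Nat.card (Quotient r') = Nat.card {q // ¬ P q} + 1 := by
    rw [← Finite.card_option]
    let m : Quotient r → Quotient r' := Quotient.lift (fun z => Quotient.mk r' z) (fun a b h => Quotient.sound (hle h))
    refine (Nat.card_congr (Equiv.ofBijective (fun o : Option {q // ¬ P q} => o.elim (Quotient.mk r' x0) (fun q => m q.1)) ⟨?_, ?_⟩)).symm
    · have hn : ∀ z, ¬ P (Quotient.mk r z) → ¬ M z := by
        rintro z hz ⟨w, hw, h⟩
        exact hz ⟨w, hw, Quotient.sound h⟩
      have hM0 : ∀ z, Quotient.mk r' x0 = Quotient.mk r' z → M z := by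
        intro z h
        rcases hs (Quotient.exact h) with h | h
        · exact ⟨x0, hx0, h⟩
        · exact h.2
      rintro (_ | ⟨a, ha⟩) (_ | ⟨b, hb⟩) h
      · rfl
      · induction b using Quotient.inductionOn
        exact absurd (hM0 _ h) (hn _ hb)
      · induction a using Quotient.inductionOn
        exact absurd (hM0 _ h.symm) (hn _ ha)
      · induction a using Quotient.inductionOn
        induction b using Quotient.inductionOn
        rcases hs (Quotient.exact h) with h | h
        · congr 2
          exact Quotient.sound h
        · exact absurd h.1 (hn _ ha)
    · intro q
      induction q using Quotient.inductionOn with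
      | h z =>
        by_cases hz : P (Quotient.mk r z)
        · obtain ⟨w, hw, h⟩ := hz
          exact ⟨none, Quotient.sound (Setoid.trans' _ (he w hw) (hle (Quotient.exact h)))⟩
        · exact ⟨some ⟨_, hz⟩, rfl⟩
  omega

/-- patch on `e` -/
noncomputable def patch (e : Set F) (ρ τ : F → F) : F → F := fun z => if z ∈ e then ρ z else τ z

lemma off_neg {e : Set F} {τ : F → F} {z : F} (hz : z ∉ e) : off e τ z = τ z := if_neg hz

lemma patch_neg {e : Set F} {ρ τ : F → F} {z : F} (hz : z ∉ e) : patch e ρ τ z = τ z := if_neg hz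

lemma patch_pos {e : Set F} {ρ τ : F → F} {z : F} (hz : z ∈ e) : patch e ρ τ z = ρ z := if_pos hz

lemma mem_hedge (H : PreHypermap F) (z : F) : z ∈ H.hedge z :=
  Setoid.refl' (orbitSetoid {H.theta 0, H.theta 2}) z

lemma off_le (e : Set F) (t ρ τ : F → F) : orbitSetoid {t, off e τ} ≤ orbitSetoid {t, patch e ρ τ} := by
  apply orbitSetoid_le
  rintro g (rfl | rfl) z
  · exact orbit_step (by simp) z
  · unfold off
    split_ifs with hz
    · exact Setoid.refl' _ _
    · have := orbit_step (fs := {t, patch e ρ τ}) (g := patch e ρ τ) (by simp) z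
      rwa [patch_neg hz] at this

lemma off_eq [Fintype F] {H : PreHypermap F} (hH : H.IsHypermap) (hconn : H.Connected)
    (htree : (Nat.card F : ℤ) = 2 * ((H.v : ℤ) + (H.e : ℤ) - 1)) (x0 : F) (τ : F → F)
    (hτ : H.Good (H.hedge x0) τ) :
    orbitSetoid {H.theta 1, patch (H.hedge x0) (H.theta 2) τ} = orbitSetoid {H.theta 1, off (H.hedge x0) τ} := by
  apply le_antisymm _ (off_le _ _ _ _)
  apply orbitSetoid_le
  rintro g (rfl | rfl) z
  · exact orbit_step (by simp) z
  · unfold patch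
    split_ifs with hz
    · exact (key2 hH hconn htree x0 τ hτ z _ hz (Setoid.trans' _ hz (orbit_step (by simp) z))).2 (Or.inr rfl)
    · have := orbit_step (fs := {H.theta 1, off (H.hedge x0) τ}) (g := off (H.hedge x0) τ) (by simp) z
      rwa [off_neg hz] at this

lemma count1 [Fintype F] {H : PreHypermap F} (hH : H.IsHypermap) (hconn : H.Connected)
    (htree : (Nat.card F : ℤ) = 2 * ((H.v : ℤ) + (H.e : ℤ) - 1)) (x0 : F) (τ : F → F)
    (hτ : H.Good (H.hedge x0) τ) :
    orbitCount {H.theta 1, patch (H.hedge x0) (H.theta 0) τ} +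
      Nat.card (Quotient ((orbitSetoid {H.theta 1, off (H.hedge x0) τ}).comap (Subtype.val : H.hedge x0 → F)))
    = orbitCount {H.theta 1, patch (H.hedge x0) (H.theta 2) τ} + 1 := by
  unfold orbitCount
  rw [off_eq hH hconn htree x0 τ hτ]
  have hmem := H.mem_hedge x0
  have h2 : ∀ z ∈ H.hedge x0, orbitSetoid {H.theta 1, off (H.hedge x0) τ} z (H.theta 2 z) := fun z hz =>
    (key2 hH hconn htree x0 τ hτ z _ hz (Setoid.trans' _ hz (orbit_step (by simp) z))).2 (Or.inr rfl)
  apply collapse _ _ (H.hedge x0) x0 hmem (off_le _ _ _ _)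
  · -- all of the hyperedge is collapsed
    let s : Setoid F := ⟨fun x y => (x ∈ H.hedge x0 ↔ y ∈ H.hedge x0) ∧ (x ∈ H.hedge x0 →
      orbitSetoid {H.theta 1, patch (H.hedge x0) (H.theta 0) τ} x y), by
      refine ⟨fun x => ⟨Iff.rfl, fun _ => Setoid.refl' _ _⟩, ?_, ?_⟩
      · rintro x y ⟨h, h'⟩
        exact ⟨h.symm, fun hy => Setoid.symm' _ (h' (h.2 hy))⟩
      · rintro x y z ⟨h, h'⟩ ⟨g, g'⟩
        exact ⟨h.trans g, fun hx => Setoid.trans' _ (h' hx) (g' (h.1 hx))⟩⟩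
    have hs : orbitSetoid {H.theta 0, H.theta 2} ≤ s := by
      apply orbitSetoid_le
      rintro g hg z
      refine ⟨⟨fun h => Setoid.trans' _ h (orbit_step hg z), fun h => Setoid.trans' _ h (Setoid.symm' _ (orbit_step hg z))⟩, fun hz => ?_⟩
      rcases hg with rfl | rfl
      · have := orbit_step (fs := {H.theta 1, patch (H.hedge x0) (H.theta 0) τ}) (g := patch (H.hedge x0) (H.theta 0) τ) (by simp) z
        rwa [patch_pos hz] at this
      · exact off_le _ _ _ _ (h2 z hz)
    intro x hx
    exact (hs hx).2 hmem
  · intro s hs1 hs2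
    apply orbitSetoid_le
    rintro g (rfl | rfl) z
    · exact hs1 (orbit_step (by simp) z)
    · unfold patch
      split_ifs with hz
      · exact Setoid.trans' _ (Setoid.symm' _ (hs2 z hz)) (hs2 _ (Setoid.trans' _ hz (orbit_step (by simp) z)))
      · apply hs1
        have := orbit_step (fs := {H.theta 1, off (H.hedge x0) τ}) (g := off (H.hedge x0) τ) (by simp) z
        rwa [off_neg hz] at this

lemma count2 [Fintype F] {H : PreHypermap F} (hH : H.IsHypermap) (hconn : H.Connected)
    (htree : (Nat.card F : ℤ) = 2 * ((H.v : ℤ) + (H.e : ℤ) - 1)) (x0 : F) (τ τ' : F → F)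
    (hτ : H.Good (H.hedge x0) τ) (hτ' : H.Good (H.hedge x0) τ') :
    orbitCount {H.theta 1, patch (H.hedge x0) (H.theta 0) τ} +
      orbitCount {H.theta 1, patch (H.hedge x0) (H.theta 2) τ'}
    = orbitCount {H.theta 1, patch (H.hedge x0) (H.theta 2) τ} +
      orbitCount {H.theta 1, patch (H.hedge x0) (H.theta 0) τ'} := by
  have h1 := count1 hH hconn htree x0 τ hτ
  have h2 := count1 hH hconn htree x0 τ' hτ'
  have h3 : (orbitSetoid {H.theta 1, off (H.hedge x0) τ}).comap (Subtype.val : H.hedge x0 → F) =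
      (orbitSetoid {H.theta 1, off (H.hedge x0) τ'}).comap (Subtype.val : H.hedge x0 → F) := by
    ext a b
    exact (key2 hH hconn htree x0 τ hτ a b a.2 b.2).trans
      (key2 hH hconn htree x0 τ' hτ' a b a.2 b.2).symm
  rw [h3] at h1
  omega

lemma pdual_one (H : PreHypermap F) (S : Set F) : (H.pdual S).theta 1 = H.theta 1 := by
  funext x; simp [pdual]

lemma pdual_zero (H : PreHypermap F) (S : Set F) : (H.pdual S).theta 0 =
    fun x => if x ∈ S then H.theta 2 x else H.theta 0 x := by
  funext x; simp [pdual]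

lemma pdual_two (H : PreHypermap F) (S : Set F) : (H.pdual S).theta 2 =
    fun x => if x ∈ S then H.theta 0 x else H.theta 2 x := by
  funext x; simp [pdual]

lemma sUnion_inv {H : PreHypermap F} {A : Set (Set F)} (hA : A ⊆ H.edges) {z w : F}
    (h : orbitSetoid {H.theta 0, H.theta 2} z w) : z ∈ ⋃₀ A → w ∈ ⋃₀ A := by
  rintro ⟨s, hs, hz⟩
  refine ⟨s, hs, ?_⟩
  obtain ⟨x, rfl⟩ := hA hs
  exact Setoid.trans' (orbitSetoid {H.theta 0, H.theta 2}) hz h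

lemma good_of {H : PreHypermap F} (hH : H.IsHypermap) {A : Set (Set F)} (hA : A ⊆ H.edges) (x0 : F)
    (i j : Fin 3) (hi : i = 0 ∨ i = 2) (hj : j = 0 ∨ j = 2) :
    H.Good (H.hedge x0) (fun x => if x ∈ ⋃₀ A then H.theta i x else H.theta j x) := by
  have hst : ∀ k : Fin 3, (k = 0 ∨ k = 2) → ∀ z, orbitSetoid {H.theta 0, H.theta 2} z (H.theta k z) := by
    intro k hk z
    exact orbit_step (by rcases hk with rfl | rfl <;> simp) z
  have hn : ∀ k : Fin 3, (k = 0 ∨ k = 2) → ∀ z ∉ H.hedge x0, H.theta k z ∉ H.hedge x0 :=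
    fun k hk z hz h => hz (Setoid.trans' _ h (Setoid.symm' _ (hst k hk z)))
  have hor : ∀ k : Fin 3, (k = 0 ∨ k = 2) → ∀ z, H.theta k z = H.theta 0 z ∨ H.theta k z = H.theta 2 z := by
    rintro k (rfl | rfl) z <;> simp
  intro z hz
  dsimp only
  by_cases hS : z ∈ ⋃₀ A
  · simp only [if_pos hS, if_pos (sUnion_inv hA (hst i hi z) hS)]
    exact ⟨hn i hi z hz, (hH i).1 z, (hH i).2 z, hor i hi z⟩
  · have hS' : H.theta j z ∉ ⋃₀ A := fun h => hS (sUnion_inv hA (Setoid.symm' _ (hst j hj z)) h)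
    simp only [if_neg hS, if_neg hS']
    exact ⟨hn j hj z hz, (hH j).1 z, (hH j).2 z, hor j hj z⟩

lemma face_one [Fintype F] {H : PreHypermap F} (hH : H.IsHypermap) (hconn : H.Connected)
    (htree : (Nat.card F : ℤ) = 2 * ((H.v : ℤ) + (H.e : ℤ) - 1)) :
    orbitCount {H.theta 1, H.theta 0} = 1 := by
  obtain ⟨x1⟩ := conn_nonempty hconn
  have hle : orbitSetoid {H.theta 0, H.theta 1, H.theta 2} ≤ orbitSetoid {H.theta 1, H.theta 0} := by
    apply orbitSetoid_le
    rintro g (rfl | rfl | rfl) z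
    · exact orbit_step (by simp) z
    · exact orbit_step (by simp) z
    · have hg := good_of hH (A := ∅) (by simp) z 0 0 (by simp) (by simp)
      simp only [ite_self] at hg
      have hz := H.mem_hedge z
      have h1 := (key2 hH hconn htree z _ hg z (H.theta 2 z) hz (orbit_step (by simp) z)).2 (Or.inr rfl)
      have h2 := off_le (H.hedge z) (H.theta 1) (H.theta 0) (H.theta 0) h1
      have h3 : patch (H.hedge z) (H.theta 0) (H.theta 0) = H.theta 0 := by
        funext w; simp [patch]
      rw [h3] at h2
      exact h2
  unfold orbitCount
  rw [Nat.card_eq_one_iff_unique]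
  refine ⟨⟨fun a b => ?_⟩, ⟨Quotient.mk _ x1⟩⟩
  induction a using Quotient.inductionOn
  induction b using Quotient.inductionOn
  exact Quotient.sound (hle (conn_top hconn _ _))

lemma main_count [Fintype F] {H : PreHypermap F} (hH : H.IsHypermap) (hconn : H.Connected)
    (htree : (Nat.card F : ℤ) = 2 * ((H.v : ℤ) + (H.e : ℤ) - 1)) (A : Set (Set F)) (hA : A ⊆ H.edges) :
    orbitCount {H.theta 1, (H.pdual (⋃₀ A)).theta 2} + orbitCount {H.theta 1, (H.pdual (⋃₀ A)).theta 0}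
      = H.v + 1 := by
  have hfin : A.Finite := Set.toFinite A
  induction A, hfin using Set.Finite.induction_on with
  | empty =>
    simp only [pdual_two, pdual_zero, Set.sUnion_empty, Set.mem_empty_iff_false, if_false]
    change orbitCount {H.theta 1, H.theta 2} + orbitCount {H.theta 1, H.theta 0} = _
    rw [face_one hH hconn htree]
    rfl
  | @insert s A hs hfin ih =>
    have hA' : A ⊆ H.edges := fun x hx => hA (Set.mem_insert_of_mem _ hx)
    rw [← ih hA']
    obtain ⟨x0, hx0⟩ := hA (Set.mem_insert _ _)
    have hsx : s = H.hedge x0 := hx0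
    have hdis : ∀ z ∈ H.hedge x0, z ∉ ⋃₀ A := by
      rintro z hz ⟨t, ht, hzt⟩
      obtain ⟨y, rfl⟩ := hA' ht
      apply hs
      convert ht using 1
      rw [hsx]
      ext w
      have hyz : orbitSetoid {H.theta 0, H.theta 2} y z := hzt
      exact ⟨fun h => Setoid.trans' (orbitSetoid {H.theta 0, H.theta 2}) hyz (Setoid.trans' _ (Setoid.symm' _ hz) h),
        fun h => Setoid.trans' (orbitSetoid {H.theta 0, H.theta 2}) hz (Setoid.trans' _ (Setoid.symm' _ hyz) h)⟩
    have g2 := good_of hH hA' x0 0 2 (by simp) (by simp)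
    have g0 := good_of hH hA' x0 2 0 (by simp) (by simp)
    have hc := count2 hH hconn htree x0 _ _ g2 g0
    have p1 : (H.pdual (⋃₀ (insert s A))).theta 2 = patch (H.hedge x0) (H.theta 0) (fun x => if x ∈ ⋃₀ A then H.theta 0 x else H.theta 2 x) := by
      rw [pdual_two]; funext z
      rw [Set.sUnion_insert, ← hsx, patch]
      by_cases hz : z ∈ s <;> simp [hz]
    have p2 : (H.pdual (⋃₀ (insert s A))).theta 0 = patch (H.hedge x0) (H.theta 2) (fun x => if x ∈ ⋃₀ A then H.theta 2 x else H.theta 0 x) := by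
      rw [pdual_zero]; funext z
      rw [Set.sUnion_insert, ← hsx, patch]
      by_cases hz : z ∈ s <;> simp [hz]
    have p3 : (H.pdual (⋃₀ A)).theta 2 = patch (H.hedge x0) (H.theta 2) (fun x => if x ∈ ⋃₀ A then H.theta 0 x else H.theta 2 x) := by
      rw [pdual_two]; funext z
      rw [patch]
      by_cases hz : z ∈ H.hedge x0
      · rw [if_pos hz, if_neg (hdis z hz)]
      · rw [if_neg hz]
    have p4 : (H.pdual (⋃₀ A)).theta 0 = patch (H.hedge x0) (H.theta 0) (fun x => if x ∈ ⋃₀ A then H.theta 2 x else H.theta 0 x) := by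
      rw [pdual_zero]; funext z
      rw [patch]
      by_cases hz : z ∈ H.hedge x0
      · rw [if_pos hz, if_neg (hdis z hz)]
      · rw [if_neg hz]
    rw [p1, p2, p3, p4]
    exact hc

lemma pdual_e (H : PreHypermap F) (S : Set F) : (H.pdual S).e = H.e := by
  unfold e orbitCount
  have : orbitSetoid {(H.pdual S).theta 0, (H.pdual S).theta 2} = orbitSetoid {H.theta 0, H.theta 2} := by
    apply le_antisymm
    · apply orbitSetoid_le
      rintro g (rfl | rfl) z
      · rw [pdual_zero]; dsimp only
        split_ifs <;> exact orbit_step (by simp) z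
      · rw [pdual_two]; dsimp only
        split_ifs <;> exact orbit_step (by simp) z
    · apply orbitSetoid_le
      have h0 := fun z => orbit_step (fs := {(H.pdual S).theta 0, (H.pdual S).theta 2}) (g := (H.pdual S).theta 0) (by simp) z
      have h2 := fun z => orbit_step (fs := {(H.pdual S).theta 0, (H.pdual S).theta 2}) (g := (H.pdual S).theta 2) (by simp) z
      have t0 := fun z => congrFun (pdual_zero H S) z
      have t2 := fun z => congrFun (pdual_two H S) z
      rintro g (rfl | rfl) z <;> by_cases hz : z ∈ S
      · rw [← if_pos (t := H.theta 0 z) (e := H.theta 2 z) hz, ← t2]; exact h2 z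
      · rw [← if_neg (t := H.theta 2 z) (e := H.theta 0 z) hz, ← t0]; exact h0 z
      · rw [← if_pos (t := H.theta 2 z) (e := H.theta 0 z) hz, ← t0]; exact h0 z
      · rw [← if_neg (t := H.theta 0 z) (e := H.theta 2 z) hz, ← t2]; exact h2 z
  rw [this]

lemma pdual_c (H : PreHypermap F) (S : Set F) : (H.pdual S).c = H.c := by
  unfold c orbitCount
  rw [pdual_one]
  have : orbitSetoid {(H.pdual S).theta 0, H.theta 1, (H.pdual S).theta 2} = orbitSetoid {H.theta 0, H.theta 1, H.theta 2} := by
    apply le_antisymm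
    · apply orbitSetoid_le
      rintro g (rfl | rfl | rfl) z
      · rw [pdual_zero]; dsimp only
        split_ifs <;> exact orbit_step (by simp) z
      · exact orbit_step (by simp) z
      · rw [pdual_two]; dsimp only
        split_ifs <;> exact orbit_step (by simp) z
    · apply orbitSetoid_le
      have h0 := fun z => orbit_step (fs := {(H.pdual S).theta 0, H.theta 1, (H.pdual S).theta 2}) (g := (H.pdual S).theta 0) (by simp) z
      have h2 := fun z => orbit_step (fs := {(H.pdual S).theta 0, H.theta 1, (H.pdual S).theta 2}) (g := (H.pdual S).theta 2) (by simp) z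
      have t0 := fun z => congrFun (pdual_zero H S) z
      have t2 := fun z => congrFun (pdual_two H S) z
      rintro g (rfl | rfl | rfl) z
      · by_cases hz : z ∈ S
        · rw [← if_pos (t := H.theta 0 z) (e := H.theta 2 z) hz, ← t2]; exact h2 z
        · rw [← if_neg (t := H.theta 2 z) (e := H.theta 0 z) hz, ← t0]; exact h0 z
      · exact orbit_step (by simp) z
      · by_cases hz : z ∈ S
        · rw [← if_pos (t := H.theta 2 z) (e := H.theta 0 z) hz, ← t0]; exact h0 z
        · rw [← if_neg (t := H.theta 0 z) (e := H.theta 2 z) hz, ← t2]; exact h2 z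
  rw [this]

lemma card_edges [Fintype F] (H : PreHypermap F) : H.edgeFinset.card = H.e := by
  unfold edgeFinset e orbitCount
  rw [← Set.ncard_eq_toFinset_card, ← Nat.card_coe_set_eq]
  have he : H.edges = (orbitSetoid {H.theta 0, H.theta 2}).classes := by
    ext s
    constructor
    · rintro ⟨x, rfl⟩
      refine ⟨x, ?_⟩
      ext y
      exact ⟨fun h => Setoid.symm' (orbitSetoid {H.theta 0, H.theta 2}) h, fun h => Setoid.symm' (orbitSetoid {H.theta 0, H.theta 2}) h⟩
    · rintro ⟨x, rfl⟩
      refine ⟨x, ?_⟩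
      ext y
      exact ⟨fun h => Setoid.symm' (orbitSetoid {H.theta 0, H.theta 2}) h, fun h => Setoid.symm' (orbitSetoid {H.theta 0, H.theta 2}) h⟩
  rw [he]
  exact Nat.card_congr (Setoid.quotientEquivClasses _).symm

lemma genus_zero [Fintype F] {H : PreHypermap F} (hH : H.IsHypermap) (hconn : H.Connected)
    (htree : (Nat.card F : ℤ) = 2 * ((H.v : ℤ) + (H.e : ℤ) - 1)) (A : Set (Set F)) (hA : A ⊆ H.edges) :
    (H.pdual (⋃₀ A)).eulerGenus = 0 := by
  have h := main_count hH hconn htree A hA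
  unfold eulerGenus chi
  rw [pdual_c, pdual_e, show H.c = 1 from hconn, htree]
  have hv : (H.pdual (⋃₀ A)).v = orbitCount {H.theta 1, (H.pdual (⋃₀ A)).theta 2} := by
    unfold v; rw [pdual_one]
  have hf : (H.pdual (⋃₀ A)).f = orbitCount {H.theta 1, (H.pdual (⋃₀ A)).theta 0} := by
    unfold f; rw [pdual_one, Set.pair_comm]
  rw [hv, hf]
  omega

end PreHypermap

open PreHypermap in
/-- If `H` is a connected hypermap whose underlying hypergraph is a hypertree without
cycles, i.e. `|F| = 2 (v(H) + e(H) - 1)`, then every partial dual of `H` has Euler genus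
zero, and the partial-dual Euler-genus polynomial is the constant `2 ^ e(H)`. -/
theorem statement_15 {F : Type} [Fintype F] (H : PreHypermap F)
    (hH : H.IsHypermap) (hconn : H.Connected)
    (htree : (Nat.card F : ℤ) = 2 * ((H.v : ℤ) + (H.e : ℤ) - 1)) :
    (∀ A ⊆ H.edges, (H.pdual (⋃₀ A)).eulerGenus = 0) ∧
    H.pdPoly = Polynomial.C (2 ^ H.e) := by
  have h0 := genus_zero hH hconn htree
  refine ⟨h0, ?_⟩
  unfold pdPoly
  rw [Finset.sum_congr rfl (g := fun _ => (1 : Polynomial ℕ))]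
  · rw [Finset.sum_const, Finset.card_powerset, card_edges]
    simp
  · intro A hA
    rw [h0 _ (fun s hs => (Set.Finite.mem_toFinset _).1 (Finset.mem_powerset.1 hA hs))]
    simp
end
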